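/- There exists a Riemannian metric g of class C^{2,1} on the open unit ball B₁ ⊂ ℝ² whose Gauss curvature K satisfies K(x) ≥ 0 for all x ∈ B₁, and such that for every radius r with 0 < r ≤ 1 there is no map u : B_r → ℝ³ of class C² satisfying (∇u(x))ᵀ ∇u(x) = g(x) for all x ∈ B_r. (Nadirashvili–Yuan, 2008.) -/

import Mathlib

noncomputable section
open Matrix Set Metric

attribute [local instance] Matrix.normedAddCommGroup Matrix.normedSpace

abbrev E2 := EuclideanSpace ℝ (Fin 2)

/-- The Jacobian matrix (3×2) of a map `u : ℝ² → ℝ³` at a point `x`. -/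
def Jac (u : E2 → EuclideanSpace ℝ (Fin 3)) (x : E2) : Matrix (Fin 3) (Fin 2) ℝ :=
  Matrix.of fun i j => fderiv ℝ u x (EuclideanSpace.single j 1) i

/-- Partial derivative `∂ᵢf` of a scalar function on `ℝ²`. -/
def pd (i : Fin 2) (f : E2 → ℝ) (x : E2) : ℝ :=
  fderiv ℝ f x (EuclideanSpace.single i 1)

/-- The Gauss curvature of a metric `g` on (an open subset of) `ℝ²`, via the Brioschi
formula, with `E = g₁₁`, `F = g₁₂`, `G = g₂₂`. -/
def gaussK (g : E2 → Matrix (Fin 2) (Fin 2) ℝ) (x : E2) : ℝ :=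
  let E : E2 → ℝ := fun y => g y 0 0
  let F : E2 → ℝ := fun y => g y 0 1
  let G : E2 → ℝ := fun y => g y 1 1
  let M₁ : Matrix (Fin 3) (Fin 3) ℝ :=
    !![-(1 / 2) * pd 1 (pd 1 E) x + pd 0 (pd 1 F) x - (1 / 2) * pd 0 (pd 0 G) x,
        (1 / 2) * pd 0 E x, pd 0 F x - (1 / 2) * pd 1 E x;
      pd 1 F x - (1 / 2) * pd 0 G x, E x, F x;
      (1 / 2) * pd 1 G x, F x, G x]
  let M₂ : Matrix (Fin 3) (Fin 3) ℝ :=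
    !![0, (1 / 2) * pd 1 E x, (1 / 2) * pd 0 G x;
      (1 / 2) * pd 1 E x, E x, F x;
      (1 / 2) * pd 0 G x, F x, G x]
  (M₁.det - M₂.det) / (E x * G x - F x ^ 2) ^ 2


/-- Bounded and Lipschitz on the unit ball of `ℝ²`. -/
def BddLip {V : Type*} [NormedAddCommGroup V] (F : E2 → V) : Prop :=
  ∃ A : ℝ, 0 ≤ A ∧ (∀ x ∈ ball (0 : E2) 1, ‖F x‖ ≤ A) ∧
    ∀ x ∈ ball (0 : E2) 1, ∀ y ∈ ball (0 : E2) 1, ‖F x - F y‖ ≤ A * ‖x - y‖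

theorem BddLip.add {V : Type*} [NormedAddCommGroup V] {F G : E2 → V} (hF : BddLip F) (hG : BddLip G) :
    BddLip fun x => F x + G x := by
  obtain ⟨a, ha, ha1, ha2⟩ := hF
  obtain ⟨b, hb, hb1, hb2⟩ := hG
  refine ⟨a + b, by positivity, fun x hx => ?_, fun x hx y hy => ?_⟩
  · exact (norm_add_le _ _).trans (add_le_add (ha1 x hx) (hb1 x hx))
  · rw [add_sub_add_comm, add_mul]
    exact (norm_add_le _ _).trans (add_le_add (ha2 x hx y hy) (hb2 x hx y hy))

section BddLip

variable {V W Y : Type*} [NormedAddCommGroup V] [NormedSpace ℝ V]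
  [NormedAddCommGroup W] [NormedSpace ℝ W] [NormedAddCommGroup Y] [NormedSpace ℝ Y]

theorem BddLip.of_hasFDerivAt {F : E2 → V} {F' : E2 → E2 →L[ℝ] V} {A : ℝ}
    (h : ∀ x ∈ ball (0 : E2) 1, HasFDerivAt F (F' x) x)
    (hA : ∀ x ∈ ball (0 : E2) 1, ‖F' x‖ ≤ A) : BddLip F := by
  have hA0 : 0 ≤ A := (norm_nonneg _).trans (hA 0 (by simp))
  have hlip : ∀ x ∈ ball (0 : E2) 1, ∀ y ∈ ball (0 : E2) 1, ‖F x - F y‖ ≤ A * ‖x - y‖ :=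
    fun x hx y hy => (convex_ball (0 : E2) 1).norm_image_sub_le_of_norm_hasFDerivWithin_le
      (fun z hz => (h z hz).hasFDerivWithinAt) hA hy hx
  refine ⟨‖F 0‖ + A, by positivity, fun x hx => ?_, fun x hx y hy => ?_⟩
  · have h1 := hlip x hx 0 (by simp)
    have h2 : ‖x - 0‖ ≤ 1 := by simpa using (mem_ball_zero_iff.1 hx).le
    have h3 : ‖F x‖ ≤ ‖F 0‖ + ‖F x - F 0‖ := by
      simpa using norm_add_le (F 0) (F x - F 0)
    nlinarith
  · refine (hlip x hx y hy).trans ?_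
    gcongr
    linarith [norm_nonneg (F 0)]

theorem BddLip.bilin (B : V →L[ℝ] W →L[ℝ] Y) {F : E2 → V} {G : E2 → W}
    (hF : BddLip F) (hG : BddLip G) : BddLip fun x => B (F x) (G x) := by
  obtain ⟨a, ha, ha1, ha2⟩ := hF
  obtain ⟨b, hb, hb1, hb2⟩ := hG
  refine ⟨‖B‖ * a * b + ‖B‖ * a * b, by positivity, fun x hx => ?_, fun x hx y hy => ?_⟩
  · calc ‖B (F x) (G x)‖ ≤ ‖B‖ * ‖F x‖ * ‖G x‖ := B.le_opNorm₂ _ _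
      _ ≤ ‖B‖ * a * b := by gcongr <;> [exact ha1 x hx; exact hb1 x hx]
      _ ≤ _ := by linarith [show 0 ≤ ‖B‖ * a * b by positivity]
  · have : B (F x) (G x) - B (F y) (G y) = B (F x - F y) (G x) + B (F y) (G x - G y) := by
      simp
    rw [this]
    calc _ ≤ ‖B‖ * ‖F x - F y‖ * ‖G x‖ + ‖B‖ * ‖F y‖ * ‖G x - G y‖ :=
          (norm_add_le _ _).trans (add_le_add (B.le_opNorm₂ _ _) (B.le_opNorm₂ _ _))
      _ ≤ ‖B‖ * (a * ‖x - y‖) * b + ‖B‖ * a * (b * ‖x - y‖) := by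
          gcongr
          exacts [ha2 x hx y hy, hb1 x hx, ha1 y hy, hb2 x hx y hy]
      _ = _ := by ring

theorem BddLip.smul {c : E2 → ℝ} {F : E2 → V} (hc : BddLip c) (hF : BddLip F) :
    BddLip fun x => c x • F x :=
  BddLip.bilin (ContinuousLinearMap.lsmul ℝ ℝ) hc hF

theorem BddLip.smulRight {c : E2 → V →L[ℝ] ℝ} {F : E2 → W} (hc : BddLip c) (hF : BddLip F) :
    BddLip fun x => (c x).smulRight (F x) :=
  BddLip.bilin (ContinuousLinearMap.smulRightL ℝ V W) hc hF

theorem BddLip.comp {η : ℝ → ℝ}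
    (hη : ∀ A, ∃ L, ∀ s t, |s| ≤ A → |t| ≤ A → |η s - η t| ≤ L * |s - t|)
    {f : E2 → ℝ} (hf : BddLip f) : BddLip fun x => η (f x) := by
  obtain ⟨a, ha, ha1, ha2⟩ := hf
  obtain ⟨L, hL⟩ := hη a
  refine ⟨|η 0| + |L| * a, by positivity, fun x hx => ?_, fun x hx y hy => ?_⟩
  · have h1 := hL (f x) 0 (ha1 x hx) (by simpa using ha)
    have h2 : |η (f x)| ≤ |η 0| + |η (f x) - η 0| := by
      simpa using abs_add_le (η 0) (η (f x) - η 0)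
    have h3 : L * |f x - 0| ≤ |L| * a := by
      rw [sub_zero]
      exact mul_le_mul (le_abs_self L) (ha1 x hx) (abs_nonneg _) (abs_nonneg _)
    simpa using h2.trans (by linarith)
  · have h1 := hL (f x) (f y) (ha1 x hx) (ha1 y hy)
    have h2 : |f x - f y| ≤ a * ‖x - y‖ := ha2 x hx y hy
    calc |η (f x) - η (f y)| ≤ |L| * (a * ‖x - y‖) :=
          h1.trans (mul_le_mul (le_abs_self L) h2 (abs_nonneg _) (abs_nonneg _))
      _ ≤ _ := by nlinarith [mul_nonneg (abs_nonneg (η 0)) (norm_nonneg (x - y))]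

end BddLip

/-- `f` has first and second derivatives `f1`, `f2` on the unit ball, and all three are bounded
and Lipschitz there. -/
structure IsC21 (f : E2 → ℝ) (f1 : E2 → E2 →L[ℝ] ℝ) (f2 : E2 → E2 →L[ℝ] E2 →L[ℝ] ℝ) :
    Prop where
  deriv_one : ∀ x ∈ ball (0 : E2) 1, HasFDerivAt f (f1 x) x
  deriv_two : ∀ x ∈ ball (0 : E2) 1, HasFDerivAt f1 (f2 x) x
  bddLip : BddLip f
  bddLip_one : BddLip f1
  bddLip_two : BddLip f2

theorem exists_lipschitz_of_hasDerivAt {η η' : ℝ → ℝ} (h : ∀ t, HasDerivAt η (η' t) t)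
    (hc : Continuous η') (A : ℝ) :
    ∃ L, ∀ s t, |s| ≤ A → |t| ≤ A → |η s - η t| ≤ L * |s - t| := by
  obtain ⟨L, hL⟩ := (isCompact_Icc (a := -A) (b := A)).exists_bound_of_continuousOn
    hc.continuousOn
  refine ⟨L, fun s t hs ht => ?_⟩
  exact (convex_Icc (-A) A).norm_image_sub_le_of_norm_hasDerivWithin_le
    (fun x _ => (h x).hasDerivWithinAt) hL (abs_le.1 ht) (abs_le.1 hs)

theorem IsC21.comp {η η1 η2 : ℝ → ℝ} (h1 : ∀ t, HasDerivAt η (η1 t) t)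
    (h2 : ∀ t, HasDerivAt η1 (η2 t) t) (hc : Continuous η2)
    (h3 : ∀ A, ∃ L, ∀ s t, |s| ≤ A → |t| ≤ A → |η2 s - η2 t| ≤ L * |s - t|)
    {f : E2 → ℝ} {f1 : E2 → E2 →L[ℝ] ℝ} {f2 : E2 → E2 →L[ℝ] E2 →L[ℝ] ℝ}
    (hf : IsC21 f f1 f2) :
    IsC21 (fun x => η (f x)) (fun x => η1 (f x) • f1 x)
      (fun x => η1 (f x) • f2 x + (η2 (f x) • f1 x).smulRight (f1 x)) := by
  have hc1 : Continuous η1 := continuous_iff_continuousAt.2 fun t => (h2 t).continuousAt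
  have b1 := BddLip.comp (exists_lipschitz_of_hasDerivAt h2 hc) hf.bddLip
  have b2 := BddLip.comp h3 hf.bddLip
  refine ⟨fun x hx => (h1 (f x)).comp_hasFDerivAt x (hf.deriv_one x hx), fun x hx => ?_,
    BddLip.comp (exists_lipschitz_of_hasDerivAt h1 hc1) hf.bddLip, b1.smul hf.bddLip_one,
    (b1.smul hf.bddLip_two).add ((b2.smul hf.bddLip_one).smulRight hf.bddLip_one)⟩
  exact ((h2 (f x)).comp_hasFDerivAt x (hf.deriv_one x hx)).smul (hf.deriv_two x hx)

/-- Bounded by `A` and `A`-Lipschitz on the unit ball. -/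
def BddLipWith {V : Type*} [NormedAddCommGroup V] (A : ℝ) (F : E2 → V) : Prop :=
  (∀ x ∈ ball (0 : E2) 1, ‖F x‖ ≤ A) ∧
    ∀ x ∈ ball (0 : E2) 1, ∀ y ∈ ball (0 : E2) 1, ‖F x - F y‖ ≤ A * ‖x - y‖

theorem BddLipWith.const_smul {V : Type*} [NormedAddCommGroup V] [NormedSpace ℝ V]
    {A B w : ℝ} {F : E2 → V} (h : BddLipWith A F) (hw : 0 ≤ w) (hB : w * A ≤ B) :
    BddLipWith B fun x => w • F x := by
  refine ⟨fun x hx => ?_, fun x hx y hy => ?_⟩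
  · rw [norm_smul, Real.norm_of_nonneg hw]
    exact (mul_le_mul_of_nonneg_left (h.1 x hx) hw).trans hB
  · rw [← smul_sub, norm_smul, Real.norm_of_nonneg hw]
    calc w * ‖F x - F y‖ ≤ w * (A * ‖x - y‖) := mul_le_mul_of_nonneg_left (h.2 x hx y hy) hw
      _ = w * A * ‖x - y‖ := by ring
      _ ≤ _ := mul_le_mul_of_nonneg_right hB (norm_nonneg _)

section Series

variable {ι V : Type*} [NormedAddCommGroup V] [CompleteSpace V]
  {A : ι → ℝ} {S : ℝ} {F : ι → E2 → V}

theorem BddLipWith.summable (hS : HasSum A S) (h : ∀ i, BddLipWith (A i) (F i)) {x : E2}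
    (hx : x ∈ ball (0 : E2) 1) : Summable fun i => F i x :=
  Summable.of_norm_bounded hS.summable fun i => (h i).1 x hx

theorem BddLipWith.bddLip_tsum (hS : HasSum A S) (hA : ∀ i, 0 ≤ A i)
    (h : ∀ i, BddLipWith (A i) (F i)) : BddLip fun x => ∑' i, F i x := by
  refine ⟨S, hS.nonneg hA, fun x hx => tsum_of_norm_bounded hS fun i => (h i).1 x hx,
    fun x hx y hy => ?_⟩
  rw [← (summable hS h hx).tsum_sub (summable hS h hy)]
  exact tsum_of_norm_bounded (hS.mul_right ‖x - y‖) fun i => (h i).2 x hx y hy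

theorem BddLipWith.hasFDerivAt_tsum [NormedSpace ℝ V] {F' : ι → E2 → E2 →L[ℝ] V} (hS : HasSum A S)
    (h : ∀ i, BddLipWith (A i) (F i)) (h' : ∀ i, BddLipWith (A i) (F' i))
    (hd : ∀ i, ∀ x ∈ ball (0 : E2) 1, HasFDerivAt (F i) (F' i x) x) {x : E2}
    (hx : x ∈ ball (0 : E2) 1) : HasFDerivAt (fun x => ∑' i, F i x) (∑' i, F' i x) x :=
  hasFDerivAt_tsum_of_isPreconnected hS.summable isOpen_ball
    (convex_ball (0 : E2) 1).isPreconnected hd (fun i y hy => (h' i).1 y hy)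
    (mem_ball_self one_pos) (summable hS h (mem_ball_self one_pos)) hx

end Series

theorem IsC21.exists_const {f : E2 → ℝ} {f1 : E2 → E2 →L[ℝ] ℝ}
    {f2 : E2 → E2 →L[ℝ] E2 →L[ℝ] ℝ} (h : IsC21 f f1 f2) :
    ∃ A : ℝ, 0 < A ∧ BddLipWith A f ∧ BddLipWith A f1 ∧ BddLipWith A f2 := by
  have mono : ∀ {V : Type} [NormedAddCommGroup V] {F : E2 → V} {a b : ℝ}, a ≤ b →
      BddLipWith a F → BddLipWith b F := fun hab hF =>
    ⟨fun x hx => (hF.1 x hx).trans hab, fun x hx y hy => (hF.2 x hx y hy).trans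
      (mul_le_mul_of_nonneg_right hab (norm_nonneg _))⟩
  obtain ⟨a, ha, ha'⟩ := h.bddLip
  obtain ⟨b, hb, hb'⟩ := h.bddLip_one
  obtain ⟨c, hc, hc'⟩ := h.bddLip_two
  exact ⟨1 + a + b + c, by positivity, mono (by linarith) ha', mono (by linarith) hb',
    mono (by linarith) hc'⟩

theorem exists_weights_isC21_tsum {ι : Type*} [Encodable ι] {f : ι → E2 → ℝ}
    {f1 : ι → E2 → E2 →L[ℝ] ℝ} {f2 : ι → E2 → E2 →L[ℝ] E2 →L[ℝ] ℝ}
    (hf : ∀ i, IsC21 (f i) (f1 i) (f2 i)) :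
    ∃ w : ι → ℝ, (∀ i, 0 < w i) ∧
      IsC21 (fun x => ∑' i, w i • f i x) (fun x => ∑' i, w i • f1 i x)
        (fun x => ∑' i, w i • f2 i x) ∧
      ∀ x ∈ ball (0 : E2) 1, Summable fun i => w i • f2 i x := by
  choose A hA h0 h1 h2 using fun i => (hf i).exists_const
  obtain ⟨e, he, S, hS, -⟩ := posSumOfEncodable one_pos ι
  have hw : ∀ i, 0 < e i / A i := fun i => div_pos (he i) (hA i)
  have hwA : ∀ i, e i / A i * A i ≤ e i := fun i => (div_mul_cancel₀ _ (hA i).ne').le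
  have g0 := fun i => (h0 i).const_smul (hw i).le (hwA i)
  have g1 := fun i => (h1 i).const_smul (hw i).le (hwA i)
  have g2 := fun i => (h2 i).const_smul (hw i).le (hwA i)
  have he' := fun i => (he i).le
  refine ⟨fun i => e i / A i, hw, ⟨fun x hx => ?_, fun x hx => ?_, ?_, ?_, ?_⟩, fun x hx => ?_⟩
  · exact BddLipWith.hasFDerivAt_tsum hS g0 g1
      (fun i x hx => ((hf i).deriv_one x hx).const_smul (e i / A i)) hx
  · exact BddLipWith.hasFDerivAt_tsum hS g1 g2
      (fun i x hx => ((hf i).deriv_two x hx).const_smul (e i / A i)) hx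
  · exact BddLipWith.bddLip_tsum hS he' g0
  · exact BddLipWith.bddLip_tsum hS he' g1
  · exact BddLipWith.bddLip_tsum hS he' g2
  · exact BddLipWith.summable hS g2 hx

theorem IsC21.contDiffOn {f : E2 → ℝ} {f1 : E2 → E2 →L[ℝ] ℝ}
    {f2 : E2 → E2 →L[ℝ] E2 →L[ℝ] ℝ} (h : IsC21 f f1 f2) :
    ContDiffOn ℝ 2 f (ball (0 : E2) 1) := by
  have hf2 : ContinuousOn f2 (ball (0 : E2) 1) := by
    obtain ⟨A, hA, -, h2⟩ := h.bddLip_two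
    have : LipschitzOnWith ⟨A, hA⟩ f2 (ball (0 : E2) 1) :=
      LipschitzOnWith.of_dist_le_mul fun x hx y hy => by
        rw [dist_eq_norm, dist_eq_norm]; exact h2 x hx y hy
    exact this.continuousOn
  have e1 : ∀ x ∈ ball (0 : E2) 1, fderiv ℝ f x = f1 x := fun x hx => (h.deriv_one x hx).fderiv
  have e2 : ∀ x ∈ ball (0 : E2) 1, fderiv ℝ f1 x = f2 x := fun x hx => (h.deriv_two x hx).fderiv
  have c1 : ContDiffOn ℝ 1 f1 (ball (0 : E2) 1) := by
    rw [show (1 : WithTop ℕ∞) = 0 + 1 by simp, contDiffOn_succ_iff_fderiv_of_isOpen isOpen_ball]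
    refine ⟨fun x hx => (h.deriv_two x hx).differentiableAt.differentiableWithinAt, by simp, ?_⟩
    exact contDiffOn_zero.2 (hf2.congr e2)
  rw [show (2 : WithTop ℕ∞) = 1 + 1 by norm_num,
    contDiffOn_succ_iff_fderiv_of_isOpen isOpen_ball]
  exact ⟨fun x hx => (h.deriv_one x hx).differentiableAt.differentiableWithinAt, by simp,
    c1.congr e1⟩

theorem fderiv_iteratedFDeriv_one_sub {V : Type*} [NormedAddCommGroup V] [NormedSpace ℝ V]
    (f : E2 → V) (x y : E2) :
    ‖iteratedFDeriv ℝ 2 f x - iteratedFDeriv ℝ 2 f y‖ =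
      ‖fderiv ℝ (fderiv ℝ f) x - fderiv ℝ (fderiv ℝ f) y‖ := by
  rw [← dist_eq_norm, ← dist_eq_norm (fderiv ℝ (fderiv ℝ f) x)]
  have h : iteratedFDeriv ℝ 2 f =
      (continuousMultilinearCurryRightEquiv' ℝ 1 E2 V).symm ∘
        iteratedFDeriv ℝ 1 (fderiv ℝ f) := by
    ext1 z; exact iteratedFDeriv_succ_eq_comp_right (n := 1)
  have h1 : iteratedFDeriv ℝ 1 (fderiv ℝ f) =
      (continuousMultilinearCurryFin1 ℝ E2 (E2 →L[ℝ] V)).symm ∘ fderiv ℝ (fderiv ℝ f) := by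
    ext z m
    simp [iteratedFDeriv_one_apply]
  rw [h, h1]
  simp only [Function.comp_apply, LinearIsometryEquiv.dist_map]

theorem IsC21.lipschitzOnWith {f : E2 → ℝ} {f1 : E2 → E2 →L[ℝ] ℝ}
    {f2 : E2 → E2 →L[ℝ] E2 →L[ℝ] ℝ} (h : IsC21 f f1 f2) :
    ∃ L : NNReal, LipschitzOnWith L (iteratedFDeriv ℝ 2 f) (ball (0 : E2) 1) := by
  obtain ⟨A, hA, -, h2⟩ := h.bddLip_two
  have e : ∀ x ∈ ball (0 : E2) 1, fderiv ℝ (fderiv ℝ f) x = f2 x := fun x hx => by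
    have : fderiv ℝ f =ᶠ[nhds x] f1 :=
      Filter.eventuallyEq_of_mem (isOpen_ball.mem_nhds hx) fun y hy => (h.deriv_one y hy).fderiv
    rw [this.fderiv_eq, (h.deriv_two x hx).fderiv]
  refine ⟨⟨A, hA⟩, LipschitzOnWith.of_dist_le_mul fun x hx y hy => ?_⟩
  rw [dist_eq_norm, dist_eq_norm, fderiv_iteratedFDeriv_one_sub, e x hx, e y hy]
  exact h2 x hx y hy

/-- The standard basis of `ℝ²`. -/
abbrev stdVec (i : Fin 2) : E2 := EuclideanSpace.single i (1 : ℝ)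

/-- The radial profile, as a function of the squared radius, whose Laplacian is `max 0 (1 - r²)`. -/
def prof (t : ℝ) : ℝ := if t ≤ 1 then t / 4 - t ^ 2 / 16 else Real.log t / 8 + 3 / 16

/-- The derivative of `prof`. -/
def prof1 (t : ℝ) : ℝ := if t ≤ 1 then 1 / 4 - t / 8 else 1 / (8 * t)

/-- The second derivative of `prof`. -/
def prof2 (t : ℝ) : ℝ := -(1 / 8) * ((max 1 t)⁻¹) ^ 2

theorem hasDerivAt_ite {f g : ℝ → ℝ} {a d e : ℝ} {t : ℝ} (hf : t ≤ a → HasDerivAt f d t)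
    (hg : a ≤ t → HasDerivAt g e t) (hfg : f a = g a) (hde : t = a → d = e) :
    HasDerivAt (fun t => if t ≤ a then f t else g t) (if t ≤ a then d else e) t := by
  rcases lt_trichotomy t a with h | h | h
  · rw [if_pos h.le]
    refine (hf h.le).congr_of_eventuallyEq ?_
    filter_upwards [gt_mem_nhds h] with s hs
    rw [if_pos hs.le]
  · subst h
    rw [if_pos le_rfl]
    have h1 : HasDerivWithinAt (fun s => if s ≤ t then f s else g s) d (Iic t) t :=
      (hf le_rfl).hasDerivWithinAt.congr (fun s hs => if_pos hs) (if_pos le_rfl)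
    have h2 : HasDerivWithinAt (fun s => if s ≤ t then f s else g s) d (Ici t) t := by
      rw [hde rfl]
      refine (hg le_rfl).hasDerivWithinAt.congr (fun s hs => ?_) ?_
      · rcases eq_or_lt_of_le (mem_Ici.1 hs) with h | h
        · subst h; rw [if_pos le_rfl, hfg]
        · rw [if_neg (not_le.2 h)]
      · rw [if_pos le_rfl, hfg]
    have := h1.union h2
    rwa [Iic_union_Ici, hasDerivWithinAt_univ] at this
  · rw [if_neg (not_le.2 h)]
    refine (hg h.le).congr_of_eventuallyEq ?_
    filter_upwards [lt_mem_nhds h] with s hs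
    rw [if_neg (not_le.2 hs)]

theorem hasDerivAt_prof (t : ℝ) : HasDerivAt prof (prof1 t) t := by
  refine hasDerivAt_ite (fun _ => ?_) (fun h => ?_) (by norm_num) (fun h => by rw [h]; norm_num)
  · have := ((hasDerivAt_id t).div_const 4).sub (((hasDerivAt_id t).pow 2).div_const 16)
    exact this.congr_deriv (by simp; ring)
  · have ht : t ≠ 0 := by linarith
    have := ((Real.hasDerivAt_log ht).div_const 8).add_const (3 / 16)
    exact this.congr_deriv (by field_simp)

theorem hasDerivAt_prof1 (t : ℝ) : HasDerivAt prof1 (prof2 t) t := by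
  have h : prof2 t = if t ≤ 1 then -(1 / 8) else -(1 / 8) * (t⁻¹) ^ 2 := by
    unfold prof2
    split_ifs with h
    · rw [max_eq_left h]; norm_num
    · rw [max_eq_right (not_le.1 h).le]
  rw [h]
  refine hasDerivAt_ite (fun _ => ?_) (fun h => ?_) (by norm_num) (fun h => by rw [h]; norm_num)
  · have := ((hasDerivAt_id t).div_const 8).const_sub (1 / 4)
    exact this.congr_deriv (by ring)
  · have ht : t ≠ 0 := by linarith
    have := (hasDerivAt_inv ht).const_mul (1 / 8)
    refine (this.congr_deriv (by field_simp)).congr_of_eventuallyEq (.of_forall fun s => ?_)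
    simp [mul_comm]

theorem prof2_lipschitz (s t : ℝ) : |prof2 s - prof2 t| ≤ 1 * |s - t| := by
  have hs : 1 ≤ max 1 s := le_max_left _ _
  have ht : 1 ≤ max 1 t := le_max_left _ _
  have hst : |max 1 s - max 1 t| ≤ |s - t| := by
    simpa using abs_max_sub_max_le_max 1 s 1 t
  unfold prof2
  set x := max 1 s
  set y := max 1 t
  have e : -(1 / 8) * (x⁻¹) ^ 2 - -(1 / 8) * (y⁻¹) ^ 2 =
      (x - y) * ((x⁻¹ * (y⁻¹) ^ 2 + (x⁻¹) ^ 2 * y⁻¹) / 8) := by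
    field_simp; ring
  have hx : x⁻¹ ≤ 1 := inv_le_one_of_one_le₀ hs
  have hy : y⁻¹ ≤ 1 := inv_le_one_of_one_le₀ ht
  have hx0 : 0 ≤ x⁻¹ := by positivity
  have hy0 : 0 ≤ y⁻¹ := by positivity
  have hp : x⁻¹ * (y⁻¹) ^ 2 ≤ 1 := mul_le_one₀ hx (by positivity) (pow_le_one₀ hy0 hy)
  have hq : (x⁻¹) ^ 2 * y⁻¹ ≤ 1 := mul_le_one₀ (pow_le_one₀ hx0 hx) hy0 hy
  rw [e, abs_mul, mul_comm 1, abs_of_nonneg (show 0 ≤ (x⁻¹ * (y⁻¹) ^ 2 + (x⁻¹) ^ 2 * y⁻¹) / 8 by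
    positivity)]
  exact mul_le_mul hst (by linarith) (by positivity) (abs_nonneg _)

theorem continuous_prof2 : Continuous prof2 := by
  unfold prof2
  refine continuous_const.mul (Continuous.pow (Continuous.inv₀ (by fun_prop) fun t => ?_) 2)
  have : (1 : ℝ) ≤ max 1 t := le_max_left _ _
  positivity

theorem prof_laplacian (t : ℝ) : 4 * prof1 t + 4 * (t * prof2 t) = max 0 (1 - t) := by
  unfold prof1 prof2
  split_ifs with h
  · rw [max_eq_left h, max_eq_right (by linarith)]; ring
  · have h := not_le.1 h
    rw [max_eq_right h.le, max_eq_left (by linarith)]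
    have : t ≠ 0 := by positivity
    field_simp; ring

theorem isC21_sqDist (p : E2) (a : ℝ) :
    IsC21 (fun x => a * ‖x - p‖ ^ 2) (fun x => (2 * a) • innerSL ℝ (x - p))
      (fun _ => (2 * a) • innerSL ℝ) := by
  have d1 : ∀ x : E2, HasFDerivAt (fun x => a * ‖x - p‖ ^ 2) ((2 * a) • innerSL ℝ (x - p)) x := by
    intro x
    have := (((hasFDerivAt_id x).sub_const p).norm_sq).const_mul a
    refine this.congr_fderiv ?_
    ext v; simp; ring
  have d2 : ∀ x : E2, HasFDerivAt (fun x => (2 * a) • innerSL ℝ (x - p))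
      ((2 * a) • innerSL ℝ : E2 →L[ℝ] E2 →L[ℝ] ℝ) x := by
    intro x
    have := ((innerSL ℝ : E2 →L[ℝ] E2 →L[ℝ] ℝ).hasFDerivAt.comp x
      ((hasFDerivAt_id x).sub_const p)).const_smul (2 * a)
    exact this
  have b1 : BddLip fun x : E2 => (2 * a) • innerSL ℝ (x - p) :=
    .of_hasFDerivAt (fun x _ => d2 x) fun x _ => le_rfl
  refine ⟨fun x _ => d1 x, fun x _ => d2 x, ?_, b1, ?_⟩
  · obtain ⟨A, -, hA, -⟩ := b1
    exact .of_hasFDerivAt (fun x _ => d1 x) hA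
  · exact .of_hasFDerivAt (F' := fun _ => 0) (A := 0) (fun x _ => hasFDerivAt_const _ _) (by simp)

/-- The trace of a bilinear form on `ℝ²`. -/
def lap : (E2 →L[ℝ] E2 →L[ℝ] ℝ) →L[ℝ] ℝ :=
  ∑ i, (ContinuousLinearMap.apply ℝ ℝ (stdVec i)).comp
    (ContinuousLinearMap.apply ℝ (E2 →L[ℝ] ℝ) (stdVec i))

theorem lap_apply (B : E2 →L[ℝ] E2 →L[ℝ] ℝ) :
    lap B = B (stdVec 0) (stdVec 0) + B (stdVec 1) (stdVec 1) := by
  simp [lap, Fin.sum_univ_two]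

theorem exists_bump (p : E2) (a : ℝ) :
    ∃ f f1 f2, IsC21 f f1 f2 ∧ ∀ x, lap (f2 x) = a * max 0 (1 - a * ‖x - p‖ ^ 2) := by
  refine ⟨_, _, _, (isC21_sqDist p a).comp hasDerivAt_prof hasDerivAt_prof1 continuous_prof2
    fun A => ⟨1, fun s t _ _ => prof2_lipschitz s t⟩, fun x => ?_⟩
  rw [← prof_laplacian, lap_apply]
  have h : ‖x - p‖ ^ 2 = (x 0 - p 0) ^ 2 + (x 1 - p 1) ^ 2 := by
    simp [EuclideanSpace.norm_sq_eq, Fin.sum_univ_two]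
  have e : ∀ i : Fin 2, innerSL ℝ (stdVec i) (stdVec i) = (1 : ℝ) := fun i => by
    rw [innerSL_apply_apply]; simp [stdVec]
  have e' : ∀ (y : E2) (i : Fin 2), innerSL ℝ y (stdVec i) = y i := fun y i => by
    rw [innerSL_apply_apply, EuclideanSpace.inner_single_right]; simp
  simp only [_root_.add_apply, _root_.smul_apply,
    ContinuousLinearMap.smulRight_apply, smul_eq_mul, e, e', PiLp.sub_apply, h]
  ring

/-- A conformal factor whose (unnormalised) curvature `k` is positive on prescribed discs,
vanishing at most linearly at their boundaries, and zero elsewhere. -/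
theorem exists_conformal_factor {ι : Type*} [Encodable ι] (p : ι → E2) (ρ : ι → ℝ)
    (hρ : ∀ i, 0 < ρ i) :
    ∃ (l : E2 → ℝ) (l1 : E2 → E2 →L[ℝ] ℝ) (l2 : E2 → E2 →L[ℝ] E2 →L[ℝ] ℝ) (k : E2 → ℝ),
      IsC21 l l1 l2 ∧ (∀ x, 0 < l x) ∧
      (∀ x ∈ ball (0 : E2) 1, -(1 / 2) * l x ^ 2 * lap (l2 x) +
        (1 / 2) * l x * (l1 x (stdVec 0) ^ 2 + l1 x (stdVec 1) ^ 2) = k x) ∧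
      (∀ x ∈ ball (0 : E2) 1, 0 ≤ k x) ∧
      (∀ x, (∀ i, x ∉ ball (p i) (ρ i)) → k x = 0) ∧
      ∀ i, ∃ c > 0, ∀ x ∈ ball (0 : E2) 1, c * (ρ i ^ 2 - ‖x - p i‖ ^ 2) ≤ k x := by
  choose f f1 f2 hf hlap using fun i => exists_bump (p i) (ρ i ^ 2)⁻¹
  obtain ⟨w, hw, hF, hsum⟩ := exists_weights_isC21_tsum hf
  have hη : ∀ t : ℝ, HasDerivAt (fun t => Real.exp (-2 * t)) (-2 * Real.exp (-2 * t)) t :=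
    fun t => by
      have := ((hasDerivAt_id t).const_mul (-2)).exp
      exact this.congr_deriv (by simp; ring)
  have hη1 : ∀ t : ℝ, HasDerivAt (fun t => -2 * Real.exp (-2 * t)) (4 * Real.exp (-2 * t)) t :=
    fun t => by
      exact ((hη t).const_mul (-2)).congr_deriv (by ring)
  have hη2 : ∀ t : ℝ, HasDerivAt (fun t => 4 * Real.exp (-2 * t)) (-8 * Real.exp (-2 * t)) t :=
    fun t => by
      exact ((hη t).const_mul 4).congr_deriv (by ring)
  set F := fun x => ∑' i, w i • f i x
  set F1 := fun x => ∑' i, w i • f1 i x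
  set F2 := fun x => ∑' i, w i • f2 i x with hF2
  have hl := hF.comp hη hη1 (by fun_prop)
    (exists_lipschitz_of_hasDerivAt hη2 (by fun_prop))
  set d : ι → E2 → ℝ := fun i x => w i * ((ρ i ^ 2)⁻¹ * max 0 (1 - (ρ i ^ 2)⁻¹ * ‖x - p i‖ ^ 2))
    with hd
  have hd0 : ∀ i x, 0 ≤ d i x := fun i x => by
    have := (hw i).le; have := le_max_left 0 (1 - (ρ i ^ 2)⁻¹ * ‖x - p i‖ ^ 2); positivity
  have hsd : ∀ x ∈ ball (0 : E2) 1, HasSum (fun i => d i x) (lap (F2 x)) := fun x hx => by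
    have := (hsum x hx).hasSum.mapL lap
    simpa only [map_smul, hlap, smul_eq_mul] using this
  refine ⟨_, _, _, fun x => Real.exp (-2 * F x) ^ 3 * ∑' i, d i x, hl,
    fun x => Real.exp_pos _, fun x hx => ?_, fun x hx => ?_, fun x hx => ?_, fun i => ?_⟩
  · have e := (hsd x hx).tsum_eq
    rw [lap_apply] at e
    simp only [e, lap_apply]
    simp only [_root_.add_apply, _root_.smul_apply,
      ContinuousLinearMap.smulRight_apply, smul_eq_mul]
    ring
  · exact mul_nonneg (by positivity) (tsum_nonneg fun i => hd0 i x)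
  · have : ∀ i, d i x = 0 := fun i => by
      have h := hx i
      rw [mem_ball, not_lt, dist_eq_norm] at h
      have h2 : ρ i ^ 2 ≤ ‖x - p i‖ ^ 2 := pow_le_pow_left₀ (hρ i).le h 2
      have h3 : 1 ≤ (ρ i ^ 2)⁻¹ * ‖x - p i‖ ^ 2 := by
        rw [inv_mul_eq_div, one_le_div (pow_pos (hρ i) 2)]; exact h2
      rw [hd]
      simp only
      rw [max_eq_left (by linarith)]; simp
    simp [this]
  · obtain ⟨A, hA, hA', -⟩ := hF.bddLip
    have hri := hρ i
    have hwi := hw i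
    refine ⟨Real.exp (-2 * A) ^ 3 * (w i * ((ρ i ^ 2)⁻¹ * (ρ i ^ 2)⁻¹)), by positivity,
      fun x hx => ?_⟩
    have h1 : Real.exp (-2 * A) ≤ Real.exp (-2 * F x) := by
      have := (le_abs_self _).trans (hA' x hx)
      exact Real.exp_le_exp.2 (by linarith)
    have h2 : d i x ≤ ∑' i, d i x := (hsd x hx).summable.le_tsum i fun j _ => hd0 j x
    calc _ = Real.exp (-2 * A) ^ 3 *
          (w i * ((ρ i ^ 2)⁻¹ * (1 - (ρ i ^ 2)⁻¹ * ‖x - p i‖ ^ 2))) := by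
            field_simp
      _ ≤ Real.exp (-2 * A) ^ 3 * d i x := by
          simp only [hd]
          gcongr
          exact le_max_right _ _
      _ ≤ _ := by
          have := hd0 i x
          show _ ≤ Real.exp (-2 * F x) ^ 3 * ∑' i, d i x
          gcongr

/-- The centre of the `k`-th large disc. -/
def bigCenter (k : ℕ) : E2 := EuclideanSpace.single 0 ((1 / 4 : ℝ) ^ k)

/-- The radius of the `k`-th large disc. -/
def bigRadius (k : ℕ) : ℝ := (1 / 4 : ℝ) ^ k / 20

instance nonempty_unitSphere : Nonempty (sphere (0 : E2) 1) := ⟨⟨stdVec 0, by simp [stdVec]⟩⟩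

/-- A sequence of unit vectors visiting every element of a dense sequence infinitely often. -/
def dirSeq (n : ℕ) : E2 := (TopologicalSpace.denseSeq (sphere (0 : E2) 1) (Nat.unpair n).1 : E2)

theorem norm_dirSeq (n : ℕ) : ‖dirSeq n‖ = 1 := by
  simp [dirSeq]

/-- The centres of the discs: large discs, and small discs accumulating on their boundaries. -/
def discCenter : ℕ × Option ℕ → E2
  | (k, none) => bigCenter k
  | (k, some n) => bigCenter k + (bigRadius k * (1 + (1 / 2) ^ n)) • dirSeq n

/-- The radii of the discs. -/
def discRadius : ℕ × Option ℕ → ℝ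
  | (k, none) => bigRadius k
  | (k, some n) => bigRadius k * (1 / 2) ^ n / 100

theorem bigRadius_pos (k : ℕ) : 0 < bigRadius k := by unfold bigRadius; positivity

theorem discRadius_pos (i : ℕ × Option ℕ) : 0 < discRadius i := by
  obtain ⟨k, _ | n⟩ := i
  · exact bigRadius_pos k
  · have := bigRadius_pos k
    simp only [discRadius]; positivity

theorem half_pow_le_one (n : ℕ) : (1 / 2 : ℝ) ^ n ≤ 1 := pow_le_one₀ (by norm_num) (by norm_num)

theorem discRadius_le (k : ℕ) (o : Option ℕ) : discRadius (k, o) ≤ bigRadius k := by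
  obtain _ | n := o
  · exact le_rfl
  · have := bigRadius_pos k
    have := half_pow_le_one n
    have : (0 : ℝ) < (1 / 2) ^ n := by positivity
    simp only [discRadius]
    nlinarith

theorem dist_discCenter_some (k n : ℕ) :
    dist (discCenter (k, some n)) (bigCenter k) = bigRadius k * (1 + (1 / 2) ^ n) := by
  have := bigRadius_pos k
  have h : 0 ≤ bigRadius k * (1 + (1 / 2) ^ n) := by positivity
  simp only [discCenter, dist_eq_norm, add_sub_cancel_left, norm_smul, norm_dirSeq, mul_one,
    Real.norm_of_nonneg h]

theorem dist_discCenter_le (k : ℕ) (o : Option ℕ) :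
    dist (discCenter (k, o)) (bigCenter k) ≤ 2 * bigRadius k := by
  have := bigRadius_pos k
  obtain _ | n := o
  · simp only [discCenter, dist_self]; positivity
  · rw [dist_discCenter_some]
    have := half_pow_le_one n
    nlinarith

theorem pow_gap {a : ℝ} (ha : 0 ≤ a) (ha1 : a ≤ 1) {m n : ℕ} (h : m ≠ n) :
    (1 - a) * max (a ^ m) (a ^ n) ≤ |a ^ m - a ^ n| := by
  wlog hmn : m < n generalizing m n
  · rw [max_comm, abs_sub_comm]
    exact this h.symm (lt_of_le_of_ne (not_lt.1 hmn) h.symm)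
  have h1 : a ^ n ≤ a * a ^ m := by
    rw [← pow_succ']
    exact pow_le_pow_of_le_one ha ha1 hmn
  have h2 : a * a ^ m ≤ a ^ m := mul_le_of_le_one_left (by positivity) ha1
  rw [max_eq_left (h1.trans h2), abs_of_nonneg (by linarith)]
  linarith

theorem dist_bigCenter {k l : ℕ} (h : k ≠ l) :
    7 * (bigRadius k + bigRadius l) ≤ dist (bigCenter k) (bigCenter l) := by
  have h1 := pow_gap (a := 1 / 4) (by norm_num) (by norm_num) h
  have h2 := le_max_left ((1 / 4 : ℝ) ^ k) ((1 / 4) ^ l)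
  have h3 := le_max_right ((1 / 4 : ℝ) ^ k) ((1 / 4) ^ l)
  have e : dist (bigCenter k) (bigCenter l) = |(1 / 4 : ℝ) ^ k - (1 / 4) ^ l| := by
    rw [bigCenter, bigCenter, PiLp.dist_single_same, Real.dist_eq]
  have : (0 : ℝ) < (1 / 4) ^ k := by positivity
  rw [e]
  unfold bigRadius
  linarith

theorem dist_disc_of_ne {k l : ℕ} (h : k ≠ l) (o : Option ℕ) {x : E2}
    (hx : dist x (bigCenter k) ≤ 2 * bigRadius k) :
    discRadius (l, o) + 2 * bigRadius k ≤ dist (discCenter (l, o)) x := by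
  have h1 := dist_bigCenter h
  have h2 := discRadius_le l o
  have h3 := dist_discCenter_le l o
  have h4 := dist_triangle4 (bigCenter k) x (discCenter (l, o)) (bigCenter l)
  rw [dist_comm (bigCenter k) x, dist_comm x (discCenter _)] at h4
  have := bigRadius_pos k
  have := bigRadius_pos l
  linarith

theorem dist_disc_same_some (k : ℕ) {m n : ℕ} (h : m ≠ n) :
    discRadius (k, some m) + 2 * discRadius (k, some n) ≤
      dist (discCenter (k, some m)) (discCenter (k, some n)) := by
  have h1 := abs_dist_sub_le (discCenter (k, some m)) (discCenter (k, some n)) (bigCenter k)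
  rw [dist_discCenter_some, dist_discCenter_some] at h1
  refine le_trans ?_ h1
  have hR := bigRadius_pos k
  have h2 := pow_gap (a := 1 / 2) (by norm_num) (by norm_num) h
  have h3 := le_max_left ((1 / 2 : ℝ) ^ m) ((1 / 2) ^ n)
  have h4 := le_max_right ((1 / 2 : ℝ) ^ m) ((1 / 2) ^ n)
  have h5 : (0 : ℝ) < (1 / 2) ^ m := by positivity
  have h6 : (0 : ℝ) < (1 / 2) ^ n := by positivity
  rw [← mul_sub, add_sub_add_left_eq_sub, abs_mul, abs_of_pos hR]
  simp only [discRadius]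
  nlinarith

theorem exists_disc_near {k : ℕ} {q : E2} (hq : q ∈ sphere (bigCenter k) (bigRadius k)) {ε : ℝ}
    (hε : 0 < ε) :
    ∃ n, closedBall (discCenter (k, some n)) (discRadius (k, some n)) ⊆ ball q ε := by
  have hR := bigRadius_pos k
  set R := bigRadius k
  have hv : R⁻¹ • (q - bigCenter k) ∈ sphere (0 : E2) 1 := by
    rw [mem_sphere_iff_norm] at hq
    rw [mem_sphere_zero_iff_norm, norm_smul, hq, norm_inv, Real.norm_of_nonneg hR.le,
      inv_mul_cancel₀ hR.ne']
  obtain ⟨a, ha⟩ := (TopologicalSpace.denseRange_denseSeq (sphere (0 : E2) 1)).exists_dist_lt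
    ⟨_, hv⟩ (show 0 < ε / (4 * R) by positivity)
  obtain ⟨b, hb⟩ := exists_pow_lt_of_lt_one (show 0 < ε / (4 * R) by positivity)
    (show (1 / 2 : ℝ) < 1 by norm_num)
  refine ⟨Nat.pair a b, fun x hx => ?_⟩
  have hn : (1 / 2 : ℝ) ^ (Nat.pair a b) < ε / (4 * R) :=
    (pow_le_pow_of_le_one (by norm_num) (by norm_num) (Nat.right_le_pair a b)).trans_lt hb
  have hd : ‖R⁻¹ • (q - bigCenter k) - dirSeq (Nat.pair a b)‖ < ε / (4 * R) := by
    rw [← dist_eq_norm]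
    simpa [dirSeq, Subtype.dist_eq] using ha
  set n := Nat.pair a b
  rw [lt_div_iff₀ (by positivity)] at hn hd
  have h0 : (0 : ℝ) < (1 / 2) ^ n := by positivity
  have e : discCenter (k, some n) - q =
      (-R) • (R⁻¹ • (q - bigCenter k) - dirSeq n) + (R * (1 / 2) ^ n) • dirSeq n := by
    rw [smul_sub, smul_smul, neg_mul, mul_inv_cancel₀ hR.ne', discCenter]
    module
  have h1 : dist (discCenter (k, some n)) q ≤
      R * ‖R⁻¹ • (q - bigCenter k) - dirSeq n‖ + R * (1 / 2) ^ n := by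
    rw [dist_eq_norm, e]
    refine (norm_add_le _ _).trans (le_of_eq ?_)
    rw [norm_smul, norm_smul, norm_neg, norm_dirSeq, mul_one, Real.norm_of_nonneg hR.le,
      Real.norm_of_nonneg (by positivity)]
  have h2 : dist x (discCenter (k, some n)) ≤ R * (1 / 2) ^ n / 100 := hx
  have h3 := dist_triangle x (discCenter (k, some n)) q
  rw [mem_ball]
  nlinarith

/-- A countable family of discs in the plane: there are arbitrarily small discs near the origin
whose boundary avoids all the discs and is accumulated by isolated discs of the family. -/
theorem exists_discs (r : ℝ) (hr : 0 < r) :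
    ∃ i, closedBall (discCenter i) (discRadius i) ⊆ ball 0 r ∧
      (∀ x ∈ sphere (discCenter i) (discRadius i), ∀ j,
        x ∉ ball (discCenter j) (discRadius j)) ∧
      ∀ q ∈ sphere (discCenter i) (discRadius i), ∀ ε > 0, ∃ j,
        closedBall (discCenter j) (discRadius j) ⊆ ball q ε ∧
        ∀ l ≠ j, discRadius l + 2 * discRadius j ≤ dist (discCenter l) (discCenter j) := by
  obtain ⟨k, hk⟩ := exists_pow_lt_of_lt_one (show 0 < r / 2 by positivity)
    (show (1 / 4 : ℝ) < 1 by norm_num)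
  have hR := bigRadius_pos k
  refine ⟨(k, none), fun x hx => ?_, fun x hx j hj => ?_, fun q hq ε hε => ?_⟩
  · have h1 : dist x (bigCenter k) ≤ bigRadius k := hx
    have h2 : dist (bigCenter k) 0 = (1 / 4 : ℝ) ^ k := by
      simp [bigCenter]
    have h3 := dist_triangle x (bigCenter k) 0
    rw [mem_ball]
    unfold bigRadius at h1
    have : (0 : ℝ) < (1 / 4) ^ k := by positivity
    linarith
  · have h1 : dist x (bigCenter k) = bigRadius k := hx
    obtain ⟨l, o⟩ := j
    rw [mem_ball] at hj
    by_cases hkl : k = l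
    · subst hkl
      obtain _ | n := o
      · exact absurd h1 hj.ne
      · have h2 := dist_discCenter_some k n
        have h3 := dist_triangle_left (discCenter (k, some n)) (bigCenter k) x
        simp only [discRadius] at hj
        have : (0 : ℝ) < bigRadius k * (1 / 2) ^ n := by positivity
        linarith
    · have := dist_disc_of_ne hkl o (x := x) (by linarith)
      rw [dist_comm] at hj
      linarith
  · obtain ⟨n, hn⟩ := exists_disc_near hq hε
    refine ⟨(k, some n), hn, fun l hl => ?_⟩
    obtain ⟨l, o⟩ := l
    by_cases hkl : k = l
    · subst hkl
      obtain _ | m := o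
      · have h2 := dist_discCenter_some k n
        rw [dist_comm] at h2
        have : (0 : ℝ) < bigRadius k * (1 / 2) ^ n := by positivity
        have h3 : dist (discCenter (k, none)) (discCenter (k, some n)) =
          bigRadius k * (1 + (1 / 2) ^ n) := h2
        rw [h3]
        simp only [discRadius]
        linarith
      · exact dist_disc_same_some k fun h => hl (by rw [h])
    · have := dist_disc_of_ne hkl o (dist_discCenter_le k (some n))
      have := discRadius_le k (some n)
      linarith

/-- The second derivative of `f` at `x` in the directions `i` and `j`. -/
abbrev pdd (i j : Fin 2) (f : E2 → ℝ) (x : E2) : ℝ :=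
  fderiv ℝ (fderiv ℝ f) x (stdVec i) (stdVec j)

theorem hasFDerivAt_smul_of_eq_zero {F : Type*} [NormedAddCommGroup F] [NormedSpace ℝ F]
    {f : E2 → ℝ} {f' : E2 →L[ℝ] ℝ} {G : E2 → F} {z : E2} (hf : HasFDerivAt f f' z) (h0 : f z = 0)
    (hG : ContinuousAt G z) : HasFDerivAt (fun y => f y • G y) (f'.smulRight (G z)) z := by
  have h1 := hf.smul_const (G z)
  have h2 : HasFDerivAt (fun y => f y • (G y - G z)) (0 : E2 →L[ℝ] F) z := by
    refine .of_isLittleO ?_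
    have hO : (fun y => f y) =O[nhds z] fun y => y - z := by
      have := hf.isBigO_sub
      simpa [h0] using this
    have ho : (fun y => G y - G z) =o[nhds z] fun _ => (1 : ℝ) := by
      rw [Asymptotics.isLittleO_one_iff]
      simpa using hG.tendsto.sub_const (G z)
    have := (hO.norm_right.smul_isLittleO ho)
    simpa [h0] using this
  have h3 := h1.add h2
  refine (h3.congr_fderiv (add_zero _)).congr_of_eventuallyEq (.of_forall fun y => ?_)
  simp only [Pi.add_apply]
  module

section SecondOrder

variable {U : Set E2} {f : E2 → ℝ} {x : E2}

theorem ContDiffOn.hasFDerivAt_one (hf : ContDiffOn ℝ 1 f U) (hU : IsOpen U) (hx : x ∈ U) :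
    HasFDerivAt f (fderiv ℝ f x) x :=
  ((hf.differentiableOn one_ne_zero).differentiableAt (hU.mem_nhds hx)).hasFDerivAt

theorem ContDiffOn.contDiffOn_fderiv (hf : ContDiffOn ℝ 2 f U) (hU : IsOpen U) :
    ContDiffOn ℝ 1 (fderiv ℝ f) U :=
  hf.fderiv_of_isOpen hU (by norm_num)

theorem ContDiffOn.hasFDerivAt_fderiv (hf : ContDiffOn ℝ 2 f U) (hU : IsOpen U) (hx : x ∈ U) :
    HasFDerivAt (fderiv ℝ f) (fderiv ℝ (fderiv ℝ f) x) x :=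
  (((hf.contDiffOn_fderiv hU).differentiableOn one_ne_zero).differentiableAt
    (hU.mem_nhds hx)).hasFDerivAt

theorem ContDiffOn.continuousAt_fderiv_fderiv (hf : ContDiffOn ℝ 2 f U) (hU : IsOpen U)
    (hx : x ∈ U) : ContinuousAt (fderiv ℝ (fderiv ℝ f)) x :=
  ((hf.contDiffOn_fderiv hU).continuousOn_fderiv_of_isOpen hU le_rfl).continuousAt
    (hU.mem_nhds hx)

theorem ContDiffOn.pdd_symm (hf : ContDiffOn ℝ 2 f U) (hU : IsOpen U) (hx : x ∈ U)
    (i j : Fin 2) : pdd i j f x = pdd j i f x := by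
  refine second_derivative_symmetric_of_eventually (f := f) (f' := fderiv ℝ f) ?_
    (hf.hasFDerivAt_fderiv hU hx) _ _
  filter_upwards [hU.mem_nhds hx] with y hy
  exact (hf.of_le (by norm_num)).hasFDerivAt_one hU hy

theorem ContDiffOn.hasFDerivAt_pd (hf : ContDiffOn ℝ 2 f U) (hU : IsOpen U) (hx : x ∈ U)
    (i : Fin 2) : HasFDerivAt (pd i f) ((fderiv ℝ (fderiv ℝ f) x).flip (stdVec i)) x := by
  have := (hf.hasFDerivAt_fderiv hU hx).clm_apply (hasFDerivAt_const (stdVec i) x)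
  exact this.congr_fderiv (by simp)

end SecondOrder

theorem clm_ext_stdVec {F : Type*} [NormedAddCommGroup F] [NormedSpace ℝ F] {A B : E2 →L[ℝ] F}
    (h0 : A (stdVec 0) = B (stdVec 0)) (h1 : A (stdVec 1) = B (stdVec 1)) : A = B := by
  have e : ∀ v : E2, v = v 0 • stdVec 0 + v 1 • stdVec 1 := fun v => by
    ext i; fin_cases i <;> simp [stdVec]
  ext v
  rw [e v]
  simp only [map_add, map_smul, h0, h1]

/-- The component functions of a conformal immersion `(X, Y, Z)` with conformal factor `l`. -/
structure IsConformalTriple (U : Set E2) (l X Y Z : E2 → ℝ) : Prop where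
  contDiffOn_fst : ContDiffOn ℝ 2 X U
  contDiffOn_snd : ContDiffOn ℝ 2 Y U
  contDiffOn_thd : ContDiffOn ℝ 2 Z U
  metric_zero : ∀ x ∈ U, pd 0 X x * pd 0 X x + pd 0 Y x * pd 0 Y x + pd 0 Z x * pd 0 Z x = l x
  metric_one : ∀ x ∈ U, pd 1 X x * pd 1 X x + pd 1 Y x * pd 1 Y x + pd 1 Z x * pd 1 Z x = l x
  metric_mixed : ∀ x ∈ U, pd 0 X x * pd 1 X x + pd 0 Y x * pd 1 Y x + pd 0 Z x * pd 1 Z x = 0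

namespace IsConformalTriple

variable {U : Set E2} {l X Y Z : E2 → ℝ} {l1 : E2 → E2 →L[ℝ] ℝ} {l2 : E2 →L[ℝ] E2 →L[ℝ] ℝ} {z : E2}

theorem rotate (h : IsConformalTriple U l X Y Z) : IsConformalTriple U l Y Z X := by
  refine ⟨h.2, h.3, h.1, fun x hx => ?_, fun x hx => ?_, fun x hx => ?_⟩
  · linarith [h.metric_zero x hx]
  · linarith [h.metric_one x hx]
  · linarith [h.metric_mixed x hx]

theorem deriv_metric (h : IsConformalTriple U l X Y Z) (hU : IsOpen U) (hz : z ∈ U) {i j : Fin 2}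
    {m : E2 → ℝ} {m' : E2 →L[ℝ] ℝ} (hm : HasFDerivAt m m' z)
    (hij : ∀ x ∈ U, pd i X x * pd j X x + pd i Y x * pd j Y x + pd i Z x * pd j Z x = m x)
    (k : Fin 2) : pd i X z * pdd k j X z + pd j X z * pdd k i X z +
      (pd i Y z * pdd k j Y z + pd j Y z * pdd k i Y z) +
      (pd i Z z * pdd k j Z z + pd j Z z * pdd k i Z z) = m' (stdVec k) := by
  have hX := (h.1.hasFDerivAt_pd hU hz i).mul (h.1.hasFDerivAt_pd hU hz j)
  have hY := (h.2.hasFDerivAt_pd hU hz i).mul (h.2.hasFDerivAt_pd hU hz j)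
  have hZ := (h.3.hasFDerivAt_pd hU hz i).mul (h.3.hasFDerivAt_pd hU hz j)
  have h1 := (hX.add hY).add hZ
  have h2 : HasFDerivAt m _ z := h1.congr_of_eventuallyEq
    (by filter_upwards [hU.mem_nhds hz] with x hx using (hij x hx).symm)
  rw [hm.unique h2]
  simp [pdd]

/-- The Gauss equation for a `C²` conformal immersion. -/
theorem gauss (h : IsConformalTriple U l X Y Z) (hU : IsOpen U) (hz : z ∈ U)
    (hl1 : ∀ x ∈ U, HasFDerivAt l (l1 x) x) (hl2 : HasFDerivAt l1 l2 z) :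
    pdd 0 0 X z * pdd 1 1 X z - pdd 0 1 X z ^ 2 + (pdd 0 0 Y z * pdd 1 1 Y z - pdd 0 1 Y z ^ 2) +
      (pdd 0 0 Z z * pdd 1 1 Z z - pdd 0 1 Z z ^ 2) = -(1 / 2) * lap l2 := by
  have hα : ∀ y ∈ U, pd 1 X y * pdd 0 0 X y + pd 1 Y y * pdd 0 0 Y y + pd 1 Z y * pdd 0 0 Z y =
      -(1 / 2) * l1 y (stdVec 1) := fun y hy => by
    have h1 := h.deriv_metric hU hy (hasFDerivAt_const (0 : ℝ) y) h.metric_mixed 0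
    have h2 := h.deriv_metric hU hy (hl1 y hy) h.metric_zero 1
    rw [h.1.pdd_symm hU hy 1 0, h.2.pdd_symm hU hy 1 0, h.3.pdd_symm hU hy 1 0] at h2
    simp only [_root_.zero_apply] at h1
    linarith
  have hβ : ∀ y ∈ U, pd 1 X y * pdd 1 0 X y + pd 1 Y y * pdd 1 0 Y y + pd 1 Z y * pdd 1 0 Z y =
      (1 / 2) * l1 y (stdVec 0) := fun y hy => by
    have h2 := h.deriv_metric hU hy (hl1 y hy) h.metric_one 0
    rw [h.1.pdd_symm hU hy 1 0, h.2.pdd_symm hU hy 1 0, h.3.pdd_symm hU hy 1 0]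
    linarith
  have aux : ∀ f : E2 → ℝ, ContDiffOn ℝ 2 f U → HasFDerivAt
      (fun y => (pd 1 f z - pd 1 f y) • (fderiv ℝ (fderiv ℝ f) y).flip (stdVec 0))
      ((-(fderiv ℝ (fderiv ℝ f) z).flip (stdVec 1)).smulRight
        ((fderiv ℝ (fderiv ℝ f) z).flip (stdVec 0))) z := fun f hf => by
    refine hasFDerivAt_smul_of_eq_zero (F := E2 →L[ℝ] ℝ)
      (G := fun y => (fderiv ℝ (fderiv ℝ f) y).flip (stdVec 0)) ((hf.hasFDerivAt_pd hU hz 1).const_sub _) (sub_self _) ?_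
    have hc := hf.continuousAt_fderiv_fderiv hU hz
    have e : ∀ A : E2 →L[ℝ] E2 →L[ℝ] ℝ, A.flip (stdVec 0) =
        ContinuousLinearMap.compL ℝ E2 (E2 →L[ℝ] ℝ) ℝ
          (ContinuousLinearMap.apply ℝ ℝ (stdVec 0)) A := fun A => by ext; simp
    simp only [e]
    exact (ContinuousLinearMap.continuous _).continuousAt.comp hc
  have hl : ∀ i, HasFDerivAt (fun y => l1 y (stdVec i)) (l2.flip (stdVec i)) z := fun i =>
    (hl2.clm_apply (hasFDerivAt_const (stdVec i) z)).congr_fderiv (by simp)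
  set P : Fin 2 → E2 →L[ℝ] ℝ := fun i => EuclideanSpace.proj i
  have hd := (((aux X h.1).add (aux Y h.2)).add (aux Z h.3)).add
    ((((hl 1).const_mul (-(1 / 2))).smul_const (P 0)).add
      (((hl 0).const_mul (1 / 2)).smul_const (P 1)))
  have hs := second_derivative_symmetric_of_eventually
    (f := fun y => pd 1 X z * pd 0 X y + pd 1 Y z * pd 0 Y y + pd 1 Z z * pd 0 Z y) (by
      filter_upwards [hU.mem_nhds hz] with y hy
      refine ((((h.1.hasFDerivAt_pd hU hy 0).const_mul (pd 1 X z)).add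
        ((h.2.hasFDerivAt_pd hU hy 0).const_mul (pd 1 Y z))).add
        ((h.3.hasFDerivAt_pd hU hy 0).const_mul (pd 1 Z z))).congr_fderiv ?_
      have h0 := hα y hy
      have h1 := hβ y hy
      refine clm_ext_stdVec ?_ ?_
      · simp [P, pdd, stdVec] at h0 ⊢
        linarith
      · simp [P, pdd, stdVec] at h1 ⊢
        linarith) hd (stdVec 0) (stdVec 1)
  have sX := h.1.pdd_symm hU hz 1 0
  have sY := h.2.pdd_symm hU hz 1 0
  have sZ := h.3.pdd_symm hU hz 1 0
  rw [lap_apply]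
  simp [P, pdd, stdVec] at hs sX sY sZ ⊢
  rw [sX, sY, sZ] at hs
  linarith

end IsConformalTriple

/-- The exterior product of two covectors of the plane. -/
def wedge (a b : E2 →L[ℝ] ℝ) : ℝ := a (stdVec 0) * b (stdVec 1) - a (stdVec 1) * b (stdVec 0)

/-- A surface written as a graph `Z` over the `(X, Y)`-plane, with slopes `s` and `p` and
(unnormalised) curvature `k`. -/
structure IsGraph (U : Set E2) (k X Y Z s p : E2 → ℝ) : Prop where
  isOpen : IsOpen U
  contDiffOn_fst : ContDiffOn ℝ 1 X U
  contDiffOn_snd : ContDiffOn ℝ 1 Y U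
  contDiffOn_slope : ContDiffOn ℝ 1 s U
  contDiffOn_slope' : ContDiffOn ℝ 1 p U
  hasFDerivAt_height : ∀ x ∈ U, HasFDerivAt Z (s x • fderiv ℝ X x + p x • fderiv ℝ Y x) x
  wedge_ne_zero : ∀ x ∈ U, wedge (fderiv ℝ X x) (fderiv ℝ Y x) ≠ 0
  curvature : ∀ x ∈ U, wedge (fderiv ℝ X x) (fderiv ℝ Y x) ^ 3 *
    wedge (fderiv ℝ s x) (fderiv ℝ p x) = k x
  symm : ∀ x ∈ U, wedge (fderiv ℝ s x) (fderiv ℝ X x) + wedge (fderiv ℝ p x) (fderiv ℝ Y x) = 0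

theorem IsGraph.neg {U : Set E2} {k X Y Z s p : E2 → ℝ} (h : IsGraph U k X Y Z s p) :
    IsGraph U k X Y (-Z) (-s) (-p) where
  isOpen := h.isOpen
  contDiffOn_fst := h.contDiffOn_fst
  contDiffOn_snd := h.contDiffOn_snd
  contDiffOn_slope := h.contDiffOn_slope.neg
  contDiffOn_slope' := h.contDiffOn_slope'.neg
  hasFDerivAt_height x hx := (h.hasFDerivAt_height x hx).neg.congr_fderiv (by
    simp only [Pi.neg_apply]; module)
  wedge_ne_zero := h.wedge_ne_zero
  curvature x hx := by
    rw [← h.curvature x hx, fderiv_neg, fderiv_neg]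
    simp only [wedge, _root_.neg_apply]
    ring
  symm x hx := by
    have := h.symm x hx
    rw [fderiv_neg, fderiv_neg]
    simp only [wedge, _root_.neg_apply] at this ⊢
    linarith

theorem IsGraph.mono {U V : Set E2} {k X Y Z s p : E2 → ℝ} (h : IsGraph U k X Y Z s p)
    (hV : IsOpen V) (hVU : V ⊆ U) : IsGraph V k X Y Z s p where
  isOpen := hV
  contDiffOn_fst := h.contDiffOn_fst.mono hVU
  contDiffOn_snd := h.contDiffOn_snd.mono hVU
  contDiffOn_slope := h.contDiffOn_slope.mono hVU
  contDiffOn_slope' := h.contDiffOn_slope'.mono hVU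
  hasFDerivAt_height x hx := h.hasFDerivAt_height x (hVU hx)
  wedge_ne_zero x hx := h.wedge_ne_zero x (hVU hx)
  curvature x hx := h.curvature x (hVU hx)
  symm x hx := h.symm x (hVU hx)

/-- The product of two triple products sharing an orthogonal pair of vectors of equal length. -/
theorem triple_mul_triple {x₀ y₀ z₀ x₁ y₁ z₁ l a b c a' b' c' : ℝ}
    (h0 : x₀ * x₀ + y₀ * y₀ + z₀ * z₀ = l) (h1 : x₁ * x₁ + y₁ * y₁ + z₁ * z₁ = l)
    (h01 : x₀ * x₁ + y₀ * y₁ + z₀ * z₁ = 0) :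
    (a * (y₀ * z₁ - y₁ * z₀) + b * (z₀ * x₁ - z₁ * x₀) + c * (x₀ * y₁ - x₁ * y₀)) *
      (a' * (y₀ * z₁ - y₁ * z₀) + b' * (z₀ * x₁ - z₁ * x₀) + c' * (x₀ * y₁ - x₁ * y₀)) =
    l ^ 2 * (a * a' + b * b' + c * c') -
      l * ((x₀ * a + y₀ * b + z₀ * c) * (x₀ * a' + y₀ * b' + z₀ * c') +
        (x₁ * a + y₁ * b + z₁ * c) * (x₁ * a' + y₁ * b' + z₁ * c')) := by
  have key : (a * (y₀ * z₁ - y₁ * z₀) + b * (z₀ * x₁ - z₁ * x₀) + c * (x₀ * y₁ - x₁ * y₀)) *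
      (a' * (y₀ * z₁ - y₁ * z₀) + b' * (z₀ * x₁ - z₁ * x₀) + c' * (x₀ * y₁ - x₁ * y₀)) =
    ((x₀ * x₀ + y₀ * y₀ + z₀ * z₀) * (x₁ * x₁ + y₁ * y₁ + z₁ * z₁) -
      (x₀ * x₁ + y₀ * y₁ + z₀ * z₁) ^ 2) * (a * a' + b * b' + c * c') -
      (x₁ * x₁ + y₁ * y₁ + z₁ * z₁) *
        ((x₀ * a + y₀ * b + z₀ * c) * (x₀ * a' + y₀ * b' + z₀ * c')) -
      (x₀ * x₀ + y₀ * y₀ + z₀ * z₀) *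
        ((x₁ * a + y₁ * b + z₁ * c) * (x₁ * a' + y₁ * b' + z₁ * c')) +
      (x₀ * x₁ + y₀ * y₁ + z₀ * z₁) *
        ((x₀ * a + y₀ * b + z₀ * c) * (x₁ * a' + y₁ * b' + z₁ * c') +
          (x₁ * a + y₁ * b + z₁ * c) * (x₀ * a' + y₀ * b' + z₀ * c')) := by ring
  rw [key, h0, h1, h01]
  ring

namespace IsConformalTriple

variable {U : Set E2} {l X Y Z : E2 → ℝ} {l1 : E2 → E2 →L[ℝ] ℝ} {l2 : E2 →L[ℝ] E2 →L[ℝ] ℝ} {z : E2}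

/-- The triple product of the two tangent vectors with a second derivative. -/
def sff (X Y Z : E2 → ℝ) (z : E2) (i j : Fin 2) : ℝ :=
  pdd i j X z * (pd 0 Y z * pd 1 Z z - pd 1 Y z * pd 0 Z z) +
    pdd i j Y z * (pd 0 Z z * pd 1 X z - pd 1 Z z * pd 0 X z) +
    pdd i j Z z * (pd 0 X z * pd 1 Y z - pd 1 X z * pd 0 Y z)

theorem det_sff (h : IsConformalTriple U l X Y Z) (hU : IsOpen U) (hz : z ∈ U)
    (hl1 : ∀ x ∈ U, HasFDerivAt l (l1 x) x) (hl2 : HasFDerivAt l1 l2 z) :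
    sff X Y Z z 0 0 * sff X Y Z z 1 1 - sff X Y Z z 0 1 * sff X Y Z z 0 1 =
      -(1 / 2) * l z ^ 2 * lap l2 +
        (1 / 2) * l z * (l1 z (stdVec 0) ^ 2 + l1 z (stdVec 1) ^ 2) := by
  have hg := h.gauss hU hz hl1 hl2
  have hc := hasFDerivAt_const (𝕜 := ℝ) (0 : ℝ) z
  have a0 := h.deriv_metric hU hz (hl1 z hz) h.metric_zero 0
  have a1 := h.deriv_metric hU hz (hl1 z hz) h.metric_zero 1
  have b0 := h.deriv_metric hU hz (hl1 z hz) h.metric_one 0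
  have b1 := h.deriv_metric hU hz (hl1 z hz) h.metric_one 1
  have c0 := h.deriv_metric hU hz hc h.metric_mixed 0
  have c1 := h.deriv_metric hU hz hc h.metric_mixed 1
  simp only [h.1.pdd_symm hU hz 1 0, h.2.pdd_symm hU hz 1 0, h.3.pdd_symm hU hz 1 0,
    _root_.zero_apply] at a0 a1 b0 b1 c0 c1
  have e := fun a b c a' b' c' => triple_mul_triple (a := a) (b := b) (c := c) (a' := a')
    (b' := b') (c' := c') (h.metric_zero z hz) (h.metric_one z hz) (h.metric_mixed z hz)
  have r1 : pd 0 X z * pdd 0 0 X z + pd 0 Y z * pdd 0 0 Y z + pd 0 Z z * pdd 0 0 Z z =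
    l1 z (stdVec 0) / 2 := by linarith
  have r2 : pd 0 X z * pdd 0 1 X z + pd 0 Y z * pdd 0 1 Y z + pd 0 Z z * pdd 0 1 Z z =
    l1 z (stdVec 1) / 2 := by linarith
  have r3 : pd 1 X z * pdd 0 1 X z + pd 1 Y z * pdd 0 1 Y z + pd 1 Z z * pdd 0 1 Z z =
    l1 z (stdVec 0) / 2 := by linarith
  have r4 : pd 1 X z * pdd 1 1 X z + pd 1 Y z * pdd 1 1 Y z + pd 1 Z z * pdd 1 1 Z z =
    l1 z (stdVec 1) / 2 := by linarith
  have r5 : pd 1 X z * pdd 0 0 X z + pd 1 Y z * pdd 0 0 Y z + pd 1 Z z * pdd 0 0 Z z =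
    -(l1 z (stdVec 1) / 2) := by linarith
  have r6 : pd 0 X z * pdd 1 1 X z + pd 0 Y z * pdd 1 1 Y z + pd 0 Z z * pdd 1 1 Z z =
    -(l1 z (stdVec 0) / 2) := by linarith
  simp only [sff]
  rw [e, e, r1, r2, r3, r4, r5, r6]
  linear_combination l z ^ 2 * hg

theorem isGraph (h : IsConformalTriple U l X Y Z) (hU : IsOpen U)
    (hl1 : ∀ x ∈ U, HasFDerivAt l (l1 x) x) {l2 : E2 → E2 →L[ℝ] E2 →L[ℝ] ℝ}
    (hl2 : ∀ x ∈ U, HasFDerivAt l1 (l2 x) x) {k : E2 → ℝ}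
    (hk : ∀ x ∈ U, -(1 / 2) * l x ^ 2 * lap (l2 x) +
        (1 / 2) * l x * (l1 x (stdVec 0) ^ 2 + l1 x (stdVec 1) ^ 2) = k x)
    (hD : ∀ x ∈ U, wedge (fderiv ℝ X x) (fderiv ℝ Y x) ≠ 0) :
    IsGraph U k X Y Z
      (fun x => wedge (fderiv ℝ Z x) (fderiv ℝ Y x) / wedge (fderiv ℝ X x) (fderiv ℝ Y x))
      (fun x => wedge (fderiv ℝ X x) (fderiv ℝ Z x) / wedge (fderiv ℝ X x) (fderiv ℝ Y x)) := by
  have hpd : ∀ f, ContDiffOn ℝ 2 f U → ∀ v, ContDiffOn ℝ 1 (fun x => fderiv ℝ f x v) U :=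
    fun f hf v => (hf.contDiffOn_fderiv hU).clm_apply contDiffOn_const
  have hw : ∀ f g, ContDiffOn ℝ 2 f U → ContDiffOn ℝ 2 g U →
      ContDiffOn ℝ 1 (fun x => wedge (fderiv ℝ f x) (fderiv ℝ g x)) U := fun f g hf hg =>
    ((hpd f hf _).mul (hpd g hg _)).sub ((hpd f hf _).mul (hpd g hg _))
  set s := fun x => wedge (fderiv ℝ Z x) (fderiv ℝ Y x) / wedge (fderiv ℝ X x) (fderiv ℝ Y x)
    with hs_def
  set p := fun x => wedge (fderiv ℝ X x) (fderiv ℝ Z x) / wedge (fderiv ℝ X x) (fderiv ℝ Y x)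
    with hp_def
  have hs : ContDiffOn ℝ 1 s U := (hw Z Y h.3 h.2).div (hw X Y h.1 h.2) hD
  have hp : ContDiffOn ℝ 1 p U := (hw X Z h.1 h.3).div (hw X Y h.1 h.2) hD
  have hsD : ∀ x ∈ U, s x * wedge (fderiv ℝ X x) (fderiv ℝ Y x) =
      wedge (fderiv ℝ Z x) (fderiv ℝ Y x) := fun x hx => div_mul_cancel₀ _ (hD x hx)
  have hpD : ∀ x ∈ U, p x * wedge (fderiv ℝ X x) (fderiv ℝ Y x) =
      wedge (fderiv ℝ X x) (fderiv ℝ Z x) := fun x hx => div_mul_cancel₀ _ (hD x hx)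
  have hZ : ∀ x ∈ U, ∀ i, pd i Z x = s x * pd i X x + p x * pd i Y x := fun x hx i => by
    apply mul_right_cancel₀ (hD x hx)
    have h1 := hsD x hx
    have h2 := hpD x hx
    simp only [wedge] at h1 h2 ⊢
    fin_cases i <;> simp only [pd, Fin.zero_eta, Fin.mk_one]
    · linear_combination (-fderiv ℝ X x (stdVec 0)) * h1 - fderiv ℝ Y x (stdVec 0) * h2
    · linear_combination (-fderiv ℝ X x (stdVec 1)) * h1 - fderiv ℝ Y x (stdVec 1) * h2
  have hZZ : ∀ x ∈ U, ∀ i j, pdd j i Z x = s x * pdd j i X x + pd i X x * pd j s x +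
      (p x * pdd j i Y x + pd i Y x * pd j p x) := fun x hx i j => by
    have h1 := ((hs.hasFDerivAt_one hU hx).mul (h.1.hasFDerivAt_pd hU hx i)).add
      ((hp.hasFDerivAt_one hU hx).mul (h.2.hasFDerivAt_pd hU hx i))
    have h2 := h1.congr_of_eventuallyEq (f₁ := pd i Z)
      (by filter_upwards [hU.mem_nhds hx] with y hy using hZ y hy i)
    have h3 := congrArg (fun L : E2 →L[ℝ] ℝ => L (stdVec j))
      ((h.3.hasFDerivAt_pd hU hx i).unique h2)
    simpa only [pdd, pd, _root_.add_apply, _root_.smul_apply, smul_eq_mul,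
      ContinuousLinearMap.flip_apply] using h3
  have hsff : ∀ x ∈ U, ∀ i j, sff X Y Z x j i = wedge (fderiv ℝ X x) (fderiv ℝ Y x) *
      (pd i X x * pd j s x + pd i Y x * pd j p x) := fun x hx i j => by
    have h1 := hsD x hx
    have h2 := hpD x hx
    simp only [sff]
    rw [hZZ x hx i j]
    simp only [wedge, pd] at h1 h2 ⊢
    linear_combination (pdd j i X x) * h1 + (pdd j i Y x) * h2
  refine ⟨hU, h.1.of_le (by norm_num), h.2.of_le (by norm_num), hs, hp, fun x hx => ?_, hD,
    fun x hx => ?_, fun x hx => ?_⟩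
  · refine ((h.3.of_le (by norm_num)).hasFDerivAt_one hU hx).congr_fderiv ?_
    exact clm_ext_stdVec (by simpa [pd] using hZ x hx 0) (by simpa [pd] using hZ x hx 1)
  · have h1 := h.det_sff hU hx hl1 (hl2 x hx)
    have e10 : sff X Y Z x 0 1 = sff X Y Z x 1 0 := by
      simp only [sff, h.1.pdd_symm hU hx 0 1, h.2.pdd_symm hU hx 0 1, h.3.pdd_symm hU hx 0 1]
    rw [hk x hx] at h1
    nth_rewrite 1 [e10] at h1
    rw [← h1]
    simp only [hsff x hx]
    simp only [wedge, pd]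
    ring
  · have e10 : sff X Y Z x 0 1 = sff X Y Z x 1 0 := by
      simp only [sff, h.1.pdd_symm hU hx 0 1, h.2.pdd_symm hU hx 0 1, h.3.pdd_symm hU hx 0 1]
    rw [hsff x hx, hsff x hx] at e10
    have e := mul_left_cancel₀ (hD x hx) e10
    simp only [wedge]
    simp only [pd] at e
    linear_combination e

end IsConformalTriple

theorem second_difference_ge {v σ : ℝ → ℝ} {x₀ r a : ℝ}
    (hv : ∀ x ∈ Ioo (x₀ - r) (x₀ + r), HasDerivAt v (σ x) x)
    (hσ : MonotoneOn σ (Ioo (x₀ - r) (x₀ + r))) (ha : 0 < a) (har : a < r) :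
    a / 2 * (σ (x₀ + a / 2) - σ x₀) ≤ v (x₀ + a) + v (x₀ - a) - 2 * v x₀ := by
  have key : ∀ x y : ℝ, x₀ - r < x → x < y → y < x₀ + r →
      (y - x) * σ x ≤ v y - v x ∧ v y - v x ≤ (y - x) * σ y := by
    intro x y hx hxy hy
    have hsub : ∀ t ∈ Icc x y, t ∈ Ioo (x₀ - r) (x₀ + r) := fun t ht =>
      ⟨hx.trans_le ht.1, ht.2.trans_lt hy⟩
    obtain ⟨t, ht, e⟩ := exists_hasDerivAt_eq_slope v σ hxy
      (fun t ht => (hv t (hsub t ht)).continuousAt.continuousWithinAt)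
      fun t ht => hv t (hsub t (Ioo_subset_Icc_self ht))
    have hxy' : 0 < y - x := sub_pos.2 hxy
    rw [eq_div_iff hxy'.ne'] at e
    have h1 := hσ (hsub x (left_mem_Icc.2 hxy.le)) (hsub t (Ioo_subset_Icc_self ht)) ht.1.le
    have h2 := hσ (hsub t (Ioo_subset_Icc_self ht)) (hsub y (right_mem_Icc.2 hxy.le)) ht.2.le
    constructor <;> nlinarith
  have h1 := (key (x₀ - a) x₀ (by linarith) (by linarith) (by linarith)).2
  have h2 := (key x₀ (x₀ + a / 2) (by linarith) (by linarith) (by linarith)).1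
  have h3 := (key (x₀ + a / 2) (x₀ + a) (by linarith) (by linarith) (by linarith)).1
  linarith

theorem monotoneOn_of_hasDerivAt_nonneg {f f' : ℝ → ℝ} {a b : ℝ}
    (hf : ∀ x ∈ Ioo a b, HasDerivAt f (f' x) x) (h : ∀ x ∈ Ioo a b, 0 ≤ f' x) :
    MonotoneOn f (Ioo a b) := by
  refine monotoneOn_of_deriv_nonneg (convex_Ioo a b)
    (fun x hx => (hf x hx).continuousAt.continuousWithinAt) ?_ ?_ <;> rw [interior_Ioo]
  · exact fun x hx => (hf x hx).differentiableAt.differentiableWithinAt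
  · exact fun x hx => (hf x hx).deriv ▸ h x hx

/-- If `V` is affine in `x` for `t ≥ t₀`, its `t`-derivative is differentiable in `t`, and `V` is
convex in `x`, then `V_xx` cannot grow linearly in a cone below `(x₀, t₀)`. -/
theorem false_of_cone_bound {V S S' Q Q' : ℝ → ℝ → ℝ} {x₀ t₀ r c b : ℝ} (hr : 0 < r) (hc : 0 < c)
    (hb : 0 < b)
    (hV : ∀ x ∈ Ioo (x₀ - r) (x₀ + r), ∀ t ∈ Ioo (t₀ - r) (t₀ + r),
      HasDerivAt (fun x => V x t) (S x t) x)
    (hS : ∀ x ∈ Ioo (x₀ - r) (x₀ + r), ∀ t ∈ Ioo (t₀ - r) (t₀ + r),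
      HasDerivAt (fun x => S x t) (S' x t) x)
    (hVt : ∀ x ∈ Ioo (x₀ - r) (x₀ + r), ∀ t ∈ Ioo (t₀ - r) (t₀ + r),
      HasDerivAt (fun t => V x t) (Q x t) t)
    (hQt : ∀ x ∈ Ioo (x₀ - r) (x₀ + r), ∀ t ∈ Ioo (t₀ - r) (t₀ + r),
      HasDerivAt (fun t => Q x t) (Q' x t) t)
    (hS0 : ∀ x ∈ Ioo (x₀ - r) (x₀ + r), ∀ t ∈ Ioo (t₀ - r) (t₀ + r), 0 ≤ S' x t)
    (hS1 : ∀ x ∈ Ioo (x₀ - r) (x₀ + r), ∀ t ∈ Ioo (t₀ - r) (t₀ + r), t₀ ≤ t → S' x t = 0)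
    (hS2 : ∀ x ∈ Ioo (x₀ - r) (x₀ + r), ∀ t ∈ Ioo (t₀ - r) (t₀ + r), t < t₀ →
      |x - x₀| ≤ b * (t₀ - t) → c * (t₀ - t) ≤ S' x t) : False := by
  set a := r / 2 with ha
  have hx₀ : x₀ ∈ Ioo (x₀ - r) (x₀ + r) := ⟨by linarith, by linarith⟩
  have hxp : x₀ + a ∈ Ioo (x₀ - r) (x₀ + r) := ⟨by linarith, by linarith⟩
  have hxm : x₀ - a ∈ Ioo (x₀ - r) (x₀ + r) := ⟨by linarith, by linarith⟩
  set T : ℝ → ℝ := fun t => V (x₀ + a) t + V (x₀ - a) t - 2 * V x₀ t with hT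
  set q : ℝ → ℝ := fun t => Q (x₀ + a) t + Q (x₀ - a) t - 2 * Q x₀ t with hq
  have hTq : ∀ t ∈ Ioo (t₀ - r) (t₀ + r), HasDerivAt T (q t) t := fun t ht =>
    ((hVt _ hxp t ht).add (hVt _ hxm t ht)).sub ((hVt _ hx₀ t ht).const_mul 2)
  have ht₀ : t₀ ∈ Ioo (t₀ - r) (t₀ + r) := ⟨by linarith, by linarith⟩
  have hT0 : ∀ t ∈ Ico t₀ (t₀ + r), T t = 0 := fun t ht => by
    have ht' : t ∈ Ioo (t₀ - r) (t₀ + r) := ⟨by linarith [ht.1], ht.2⟩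
    have hm := monotoneOn_of_hasDerivAt_nonneg (fun x hx => hS x hx t ht')
      (fun x hx => hS0 x hx t ht')
    have hm' := monotoneOn_of_hasDerivAt_nonneg (f := fun x => -S x t)
      (fun x hx => (hS x hx t ht').neg) (fun x hx => by rw [hS1 x hx t ht' ht.1, neg_zero])
    have h1 := second_difference_ge (fun x hx => hV x hx t ht') hm (a := a)
      (by linarith) (by linarith)
    have h2 := second_difference_ge (v := fun x => -V x t) (fun x hx => (hV x hx t ht').neg) hm'
      (a := a) (by linarith) (by linarith)
    have hx2 : x₀ + a / 2 ∈ Ioo (x₀ - r) (x₀ + r) := ⟨by linarith, by linarith⟩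
    have h3 := hm hx₀ hx2 (by linarith)
    have h4 := hm' hx₀ hx2 (by linarith)
    have h5 : S (x₀ + a / 2) t = S x₀ t := le_antisymm (by simpa using h4) h3
    simp only [h5, sub_self, mul_zero] at h1 h2
    simp only [hT]
    linarith
  have zero_deriv : ∀ f f' : ℝ → ℝ, (∀ t ∈ Ioo (t₀ - r) (t₀ + r), HasDerivAt f (f' t) t) →
      (∀ t ∈ Ico t₀ (t₀ + r), f t = 0) → ∀ t ∈ Ico t₀ (t₀ + r), f' t = 0 := by
    intro f f' hf h0 t ht
    have h1 : HasDerivWithinAt f (f' t) (Ici t) t :=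
      (hf t ⟨by linarith [ht.1], ht.2⟩).hasDerivWithinAt
    have h2 : HasDerivWithinAt f 0 (Ici t) t := by
      refine (hasDerivWithinAt_const t (Ici t) (0 : ℝ)).congr_of_eventuallyEq ?_ (h0 t ht)
      filter_upwards [self_mem_nhdsWithin, mem_nhdsWithin_of_mem_nhds (Iio_mem_nhds ht.2)]
        with y hy hy' using h0 y ⟨ht.1.trans hy, hy'⟩
    exact (uniqueDiffOn_Ici t t self_mem_Ici).eq_deriv _ h1 h2
  have hq0 := zero_deriv T q hTq hT0
  have hqq : ∀ t ∈ Ioo (t₀ - r) (t₀ + r), HasDerivAt q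
      (Q' (x₀ + a) t + Q' (x₀ - a) t - 2 * Q' x₀ t) t := fun t ht =>
    ((hQt _ hxp t ht).add (hQt _ hxm t ht)).sub ((hQt _ hx₀ t ht).const_mul 2)
  have hq' := zero_deriv q _ hqq hq0 t₀ ⟨le_rfl, by linarith⟩
  have hqd : HasDerivAt q 0 t₀ := by
    have := hqq t₀ ht₀
    simp only [hq'] at this
    exact this
  set ε := a / 2 * (c * b) / 2 with hε
  have hε0 : 0 < ε := by positivity
  have hlo := (hasDerivAt_iff_isLittleO.1 hqd).def hε0
  rw [Metric.eventually_nhds_iff] at hlo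
  obtain ⟨η, hη, hlo⟩ := hlo
  have hqη : ∀ t, |t - t₀| < η → |q t| ≤ ε * |t - t₀| := fun t ht => by
    have := hlo (y := t) (by rwa [Real.dist_eq])
    simpa [hq0 t₀ ⟨le_rfl, by linarith⟩] using this
  obtain ⟨δ, hδ, hδη⟩ := exists_between (show 0 < min (min η r) (a / (2 * b)) by positivity)
  rw [lt_min_iff, lt_min_iff, lt_div_iff₀ (by positivity)] at hδη
  obtain ⟨⟨hδη, hδr⟩, hδb⟩ := hδη
  have htt : t₀ - δ ∈ Ioo (t₀ - r) (t₀ + r) := ⟨by linarith, by linarith⟩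
  have hup : |T (t₀ - δ)| ≤ ε * δ * δ := by
    have := (convex_Icc (t₀ - δ) t₀).norm_image_sub_le_of_norm_hasDerivWithin_le (f := T) (f' := q)
      (C := ε * δ) (x := t₀) (y := t₀ - δ)
      (fun t ht => (hTq t ⟨by linarith [ht.1], by linarith [ht.2]⟩).hasDerivWithinAt)
      (fun t ht => by
        have h1 : |t - t₀| ≤ δ := abs_le.2 ⟨by linarith [ht.1], by linarith [ht.2]⟩
        exact (hqη t (h1.trans_lt hδη)).trans (by gcongr))
      (right_mem_Icc.2 (by linarith)) (left_mem_Icc.2 (by linarith))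
    rw [hT0 t₀ ⟨le_rfl, by linarith⟩, sub_zero] at this
    simpa [abs_of_pos hδ] using this
  have hm := monotoneOn_of_hasDerivAt_nonneg (fun x hx => hS x hx _ htt)
    (fun x hx => hS0 x hx _ htt)
  have h1 := second_difference_ge (fun x hx => hV x hx _ htt) hm (a := a)
    (by linarith) (by linarith)
  have hbd : b * δ < a / 2 := by linarith
  have hbδ : 0 < b * δ := by positivity
  have hx1 : x₀ + b * δ ∈ Ioo (x₀ - r) (x₀ + r) := ⟨by linarith, by linarith⟩
  have hx2 : x₀ + a / 2 ∈ Ioo (x₀ - r) (x₀ + r) := ⟨by linarith, by linarith⟩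
  have h2 := hm hx1 hx2 (by linarith)
  have h3 : c * δ * (b * δ) ≤ S (x₀ + b * δ) (t₀ - δ) - S x₀ (t₀ - δ) := by
    have hsub : ∀ x ∈ Icc x₀ (x₀ + b * δ), x ∈ Ioo (x₀ - r) (x₀ + r) := fun x hx =>
      ⟨by linarith [hx.1], by linarith [hx.2]⟩
    obtain ⟨x, hx, e⟩ := exists_hasDerivAt_eq_slope (fun x => S x (t₀ - δ)) (fun x => S' x (t₀ - δ))
      (show x₀ < x₀ + b * δ by linarith)
      (fun x hx => (hS x (hsub x hx) _ htt).continuousAt.continuousWithinAt)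
      fun x hx => hS x (hsub x (Ioo_subset_Icc_self hx)) _ htt
    rw [eq_div_iff (by linarith)] at e
    have h4 := hS2 x (hsub x (Ioo_subset_Icc_self hx)) _ htt (by linarith)
      (by rw [abs_le]; constructor <;> [linarith [hx.1]; linarith [hx.2]])
    rw [sub_sub_cancel] at h4
    rw [← e, add_sub_cancel_left]
    gcongr
  have h4 := (le_abs_self _).trans hup
  have h5 : T (t₀ - δ) = V (x₀ + a) (t₀ - δ) + V (x₀ - a) (t₀ - δ) - 2 * V x₀ (t₀ - δ) := rfl
  have h6 : a / 2 * (c * δ * (b * δ)) ≤ a / 2 * (S (x₀ + a / 2) (t₀ - δ) - S x₀ (t₀ - δ)) := by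
    gcongr
    linarith
  have h7 : 0 < a / 2 * (c * δ * (b * δ)) := by positivity
  have h8 : ε * δ * δ = a / 2 * (c * δ * (b * δ)) / 2 := by rw [hε]; ring
  linarith

theorem eq_wedge_smul {a b : E2 →L[ℝ] ℝ} (h : wedge a b ≠ 0) (φ : E2 →L[ℝ] ℝ) :
    φ = (wedge φ b / wedge a b) • a + (wedge a φ / wedge a b) • b := by
  refine clm_ext_stdVec ?_ ?_ <;>
  · simp only [_root_.add_apply, _root_.smul_apply, smul_eq_mul]
    field_simp
    simp only [wedge]
    ring

theorem exists_equiv_of_wedge_ne_zero {a b : E2 →L[ℝ] ℝ} (h : wedge a b ≠ 0) :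
    ∃ L : E2 ≃L[ℝ] ℝ × ℝ, (L : E2 →L[ℝ] ℝ × ℝ) = a.prod b := by
  have hinj : Function.Injective (a.prod b : E2 →ₗ[ℝ] ℝ × ℝ) := by
    rw [injective_iff_map_eq_zero]
    intro v hv
    have ha : a v = 0 := congrArg Prod.fst hv
    have hb : b v = 0 := congrArg Prod.snd hv
    have key : ∀ φ : E2 →L[ℝ] ℝ, φ v = 0 := fun φ => by
      rw [eq_wedge_smul h φ]
      simp [ha, hb]
    ext i
    exact key (EuclideanSpace.proj i)
  refine ⟨(LinearMap.linearEquivOfInjective _ hinj (by simp)).toContinuousLinearEquiv, ?_⟩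
  ext v <;> rfl

/-- Two functions with independent differentials form local coordinates. -/
theorem exists_chart {N : Set E2} (hN : IsOpen N) {X p : E2 → ℝ} (hX : ContDiffOn ℝ 1 X N)
    (hp : ContDiffOn ℝ 1 p N) (hJ : ∀ x ∈ N, wedge (fderiv ℝ X x) (fderiv ℝ p x) ≠ 0) {z : E2}
    (hz : z ∈ N) :
    ∃ (θ : ℝ × ℝ → E2) (r : ℝ), 0 < r ∧ θ (X z, p z) = z ∧ ∀ y ∈ ball (X z, p z) r,
      θ y ∈ N ∧ X (θ y) = y.1 ∧ p (θ y) = y.2 ∧ ∀ (φ : E2 → ℝ) (α β : ℝ),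
        HasFDerivAt φ (α • fderiv ℝ X (θ y) + β • fderiv ℝ p (θ y)) (θ y) →
        HasFDerivAt (fun y => φ (θ y))
          (α • ContinuousLinearMap.fst ℝ ℝ ℝ + β • ContinuousLinearMap.snd ℝ ℝ ℝ) y := by
  have : Nonempty (E2 ≃L[ℝ] ℝ × ℝ) := ⟨(exists_equiv_of_wedge_ne_zero (hJ z hz)).choose⟩
  choose! L hL using fun x hx => exists_equiv_of_wedge_ne_zero (hJ x hx)
  have hd : ∀ x ∈ N, HasFDerivAt (fun x => (X x, p x)) (L x : E2 →L[ℝ] ℝ × ℝ) x := fun x hx => by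
    rw [hL x hx]
    exact (hX.hasFDerivAt_one hN hx).prodMk (hp.hasFDerivAt_one hN hx)
  have hstrict : HasStrictFDerivAt (fun x => (X x, p x)) (L z : E2 →L[ℝ] ℝ × ℝ) z := by
    have hc : ContDiffAt ℝ 1 (fun x => (X x, p x)) z :=
      (hX.contDiffAt (hN.mem_nhds hz)).prodMk (hp.contDiffAt (hN.mem_nhds hz))
    exact hc.hasStrictFDerivAt' (hd z hz) one_ne_zero
  set e := hstrict.toOpenPartialHomeomorph (fun x => (X x, p x)) with he
  have hcoe : (e : E2 → ℝ × ℝ) = fun x => (X x, p x) := hstrict.toOpenPartialHomeomorph_coe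
  have hzs : z ∈ e.source := hstrict.mem_toOpenPartialHomeomorph_source
  have hez : e z = (X z, p z) := by rw [hcoe]
  have hopen := e.symm.continuousOn.isOpen_inter_preimage e.open_target hN
  have hmem : (X z, p z) ∈ e.target ∩ e.symm ⁻¹' N := by
    rw [← hez]
    exact ⟨e.map_source hzs, by rw [mem_preimage, e.left_inv hzs]; exact hz⟩
  obtain ⟨r, hr, hball⟩ := Metric.isOpen_iff.1 hopen _ hmem
  refine ⟨e.symm, r, hr, by rw [← hez, e.left_inv hzs], fun y hy => ?_⟩
  obtain ⟨hyt, hyN⟩ := hball hy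
  have hinv : (X (e.symm y), p (e.symm y)) = y := by
    have := e.right_inv hyt
    rwa [hcoe] at this
  refine ⟨hyN, congrArg Prod.fst hinv, congrArg Prod.snd hinv, fun φ α β hφ => ?_⟩
  have h1 := e.hasFDerivAt_symm (f' := L (e.symm y)) hyt (by rw [hcoe]; exact hd _ hyN)
  refine (hφ.comp y h1).congr_fderiv ?_
  have h2 : α • fderiv ℝ X (e.symm y) + β • fderiv ℝ p (e.symm y) =
      (α • ContinuousLinearMap.fst ℝ ℝ ℝ + β • ContinuousLinearMap.snd ℝ ℝ ℝ).comp
        (L (e.symm y) : E2 →L[ℝ] ℝ × ℝ) := by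
    rw [hL _ hyN]
    ext v
    simp
  rw [h2]
  ext <;> simp

theorem HasFDerivAt.hasDerivAt_fst {f : ℝ × ℝ → ℝ} {α β x t : ℝ}
    (h : HasFDerivAt f (α • ContinuousLinearMap.fst ℝ ℝ ℝ + β • ContinuousLinearMap.snd ℝ ℝ ℝ)
      (x, t)) : HasDerivAt (fun x => f (x, t)) α x := by
  have := h.comp_hasDerivAt x ((hasDerivAt_id x).prodMk (hasDerivAt_const x t))
  exact this.congr_deriv (by simp)

theorem HasFDerivAt.hasDerivAt_snd {f : ℝ × ℝ → ℝ} {α β x t : ℝ}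
    (h : HasFDerivAt f (α • ContinuousLinearMap.fst ℝ ℝ ℝ + β • ContinuousLinearMap.snd ℝ ℝ ℝ)
      (x, t)) : HasDerivAt (fun t => f (x, t)) β t := by
  have := h.comp_hasDerivAt t ((hasDerivAt_const t x).prodMk (hasDerivAt_id t))
  exact this.congr_deriv (by simp)

/-- A function vanishing at a point and decreasing in the second variable is bounded below
linearly in a cone below that point. -/
theorem exists_cone_bound {F : ℝ × ℝ → ℝ} {α β x₀ t₀ : ℝ} (h0 : F (x₀, t₀) = 0) (hβ : β < 0)
    (h : HasFDerivAt F (α • ContinuousLinearMap.fst ℝ ℝ ℝ + β • ContinuousLinearMap.snd ℝ ℝ ℝ)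
      (x₀, t₀)) :
    ∃ b > 0, ∃ r > 0, ∀ x t, |t - t₀| < r → t < t₀ → |x - x₀| ≤ b * (t₀ - t) →
      -β / 2 * (t₀ - t) ≤ F (x, t) := by
  have hε : 0 < -β / 4 := by linarith
  have hlo := h.isLittleO.def hε
  rw [Metric.eventually_nhds_iff] at hlo
  obtain ⟨η, hη, hlo⟩ := hlo
  have hα : 0 < 4 * (|α| + 1) := by positivity
  refine ⟨min 1 (-β / (4 * (|α| + 1))), lt_min one_pos (div_pos (by linarith) hα), η, hη,
    fun x t ht htt hx => ?_⟩
  have hδ : 0 < t₀ - t := by linarith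
  have h1 : |x - x₀| ≤ t₀ - t := hx.trans (by nlinarith [min_le_left 1 (-β / (4 * (|α| + 1)))])
  have h2 : |α| * |x - x₀| ≤ -β / 4 * (t₀ - t) := by
    have h3 : |x - x₀| ≤ -β / (4 * (|α| + 1)) * (t₀ - t) :=
      hx.trans (by gcongr; exact min_le_right _ _)
    have h4 : |α| * |x - x₀| ≤ (|α| + 1) * (-β / (4 * (|α| + 1)) * (t₀ - t)) := by
      gcongr; linarith
    refine h4.trans (le_of_eq ?_)
    field_simp
  have habs : |t - t₀| = t₀ - t := by rw [abs_sub_comm, abs_of_pos hδ]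
  have hnorm : ‖((x, t) : ℝ × ℝ) - (x₀, t₀)‖ = t₀ - t := by
    rw [Prod.norm_def]
    simp only [Prod.fst_sub, Prod.snd_sub, Real.norm_eq_abs, habs]
    exact max_eq_right h1
  have h5 := hlo (y := (x, t)) (by rw [dist_eq_norm, hnorm, ← habs]; exact ht)
  rw [hnorm, h0] at h5
  simp only [Prod.mk_sub_mk, _root_.add_apply, _root_.smul_apply, ContinuousLinearMap.coe_fst',
    ContinuousLinearMap.coe_snd', smul_eq_mul, sub_zero, Real.norm_eq_abs] at h5
  have h6 := (abs_le.1 h5).1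
  have h7 : -(|α| * |x - x₀|) ≤ α * (x - x₀) := by
    rw [← abs_mul]; exact neg_abs_le _
  linarith

theorem ContDiffOn.continuousOn_wedge {U : Set E2} {f g : E2 → ℝ} (hf : ContDiffOn ℝ 1 f U)
    (hg : ContDiffOn ℝ 1 g U) (hU : IsOpen U) :
    ContinuousOn (fun x => wedge (fderiv ℝ f x) (fderiv ℝ g x)) U := by
  have hpd : ∀ {f : E2 → ℝ}, ContDiffOn ℝ 1 f U → ∀ v, ContinuousOn (fun x => fderiv ℝ f x v) U :=
    fun hf v => (ContinuousLinearMap.apply ℝ ℝ v).continuous.comp_continuousOn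
      (hf.continuousOn_fderiv_of_isOpen hU le_rfl)
  exact ((hpd hf _).mul (hpd hg _)).sub ((hpd hf _).mul (hpd hg _))

/-- At a boundary maximum point of `p` on a disc, moving in a direction which increases `p` to first
order leaves the disc to first order. -/
theorem inner_pos_of_isMaxOn {p : E2 → ℝ} {p' : E2 →L[ℝ] ℝ} {P z τ : E2} {ρ : ℝ}
    (hz : ‖z - P‖ = ρ) (hρ : 0 < ρ) (hp : HasFDerivAt p p' z)
    (hmax : IsMaxOn p (closedBall P ρ) z) (hτ : p' τ = 1) : 0 < inner ℝ (z - P) τ := by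
  by_contra! hle
  set n := z - P with hn
  set ε : ℝ := 1 / (2 * (|p' n| + 1)) with hε
  have hε0 : 0 < ε := by positivity
  set h : ℝ := 2 * ε * ρ ^ 2 / (‖τ - ε • n‖ ^ 2 + 1) with hh
  have hh0 : 0 < h := by positivity
  have hhe : h * (‖τ - ε • n‖ ^ 2 + 1) = 2 * ε * ρ ^ 2 := div_mul_cancel₀ _ (by positivity)
  have hzmem : z ∈ closedBall P ρ := by rw [mem_closedBall, dist_eq_norm, hz]
  have hwmem : z + h • (τ - ε • n) ∈ closedBall P ρ := by
    have e : z + h • (τ - ε • n) - P = n + h • (τ - ε • n) := by rw [hn]; abel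
    rw [mem_closedBall, dist_eq_norm, e]
    refine abs_le_of_sq_le_sq' ?_ hρ.le |>.2
    rw [norm_add_sq_real, inner_smul_right, inner_sub_right, inner_smul_right,
      real_inner_self_eq_norm_sq, norm_smul, mul_pow, hz, Real.norm_of_nonneg hh0.le]
    nlinarith [mul_nonneg hh0.le hh0.le, mul_nonneg hh0.le (neg_nonneg.2 hle)]
  have h1 := sub_mem_posTangentConeAt_of_segment_subset
    ((convex_closedBall P ρ).segment_subset hzmem hwmem)
  have h2 := hmax.localize.hasFDerivWithinAt_nonpos hp.hasFDerivWithinAt h1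
  rw [add_sub_cancel_left, map_smul, map_sub, map_smul, hτ, smul_eq_mul, smul_eq_mul] at h2
  have h3 : ε * p' n ≤ 1 / 2 := by
    have h4 : ε * p' n ≤ ε * (|p' n| + 1) := by
      gcongr; linarith [le_abs_self (p' n)]
    refine h4.trans (le_of_eq ?_)
    rw [hε]; field_simp
  nlinarith

theorem IsGraph.false_of_disc {U : Set E2} {k X Y Z s p : E2 → ℝ} (h : IsGraph U k X Y Z s p)
    (hJ : ∀ x ∈ U, 0 < wedge (fderiv ℝ X x) (fderiv ℝ Y x) ^ 3 *
      wedge (fderiv ℝ X x) (fderiv ℝ p x))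
    {P : E2} {ρ c : ℝ} (hρ : 0 < ρ) (hc : 0 < c) (hsub : closedBall P ρ ⊆ U)
    (hk0 : ∀ x ∈ U, 0 ≤ k x) (hkc : ∀ x ∈ U, c * (ρ ^ 2 - ‖x - P‖ ^ 2) ≤ k x)
    (hout : ∀ x ∈ ball P (2 * ρ), x ∉ ball P ρ → k x = 0) : False := by
  have hU := h.isOpen
  have hJ0 : ∀ x ∈ U, wedge (fderiv ℝ X x) (fderiv ℝ p x) ≠ 0 := fun x hx h0 => by
    have := hJ x hx
    rw [h0, mul_zero] at this
    exact this.false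
  obtain ⟨z, hz, hmax⟩ := (isCompact_closedBall P ρ).exists_isMaxOn
    ⟨P, mem_closedBall_self hρ.le⟩ (h.contDiffOn_slope'.continuousOn.mono hsub)
  have hlt : ∀ w ∈ ball P ρ, p w < p z := fun w hw => by
    have hw' := ball_subset_closedBall hw
    refine lt_of_le_of_ne (hmax hw') fun e => hJ0 w (hsub hw') ?_
    have hloc : IsLocalMax p w := by
      filter_upwards [isOpen_ball.mem_nhds hw] with y hy
      rw [e]
      exact hmax (ball_subset_closedBall hy)
    rw [hloc.fderiv_eq_zero]
    simp [wedge]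
  have hzU := hsub hz
  have hzn : ‖z - P‖ = ρ := by
    rw [← dist_eq_norm]
    exact le_antisymm hz (not_lt.1 fun hlt' => (hlt z hlt').false)
  set m : E2 → ℝ := fun x => wedge (fderiv ℝ X x) (fderiv ℝ Y x) ^ 3 *
    wedge (fderiv ℝ X x) (fderiv ℝ p x) with hm
  have hmc : ContinuousOn m U := ((h.2.continuousOn_wedge h.3 hU).pow 3).mul (h.2.continuousOn_wedge h.5 hU)
  set M := m z + 1 with hM
  have hM0 : 0 < M := by linarith [hJ z hzU]
  set N := (U ∩ m ⁻¹' Iio M) ∩ ball P (2 * ρ) with hN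
  have hNo : IsOpen N := (hmc.isOpen_inter_preimage hU isOpen_Iio).inter isOpen_ball
  have hzN : z ∈ N := ⟨⟨hzU, show m z < m z + 1 by linarith⟩, by
    rw [mem_ball, dist_eq_norm, hzn]; linarith⟩
  have hNU : N ⊆ U := fun x hx => hx.1.1
  obtain ⟨θ, r, hr, hθz, hθ⟩ := exists_chart hNo (h.contDiffOn_fst.mono hNU)
    (h.contDiffOn_slope'.mono hNU) (fun x hx => hJ0 x (hNU hx)) hzN
  have hbox : ∀ {r'}, r' ≤ r → ∀ x ∈ Ioo (X z - r') (X z + r'), ∀ t ∈ Ioo (p z - r') (p z + r'),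
      (x, t) ∈ ball (X z, p z) r := fun hr' x hx t ht => by
    rw [mem_ball, Prod.dist_eq, max_lt_iff, Real.dist_eq, Real.dist_eq, abs_lt, abs_lt]
    exact ⟨⟨by linarith [hx.1], by linarith [hx.2]⟩, ⟨by linarith [ht.1], by linarith [ht.2]⟩⟩
  -- the defining function of the disc, read in the chart
  set f : E2 → ℝ := fun x => ρ ^ 2 - ‖x - P‖ ^ 2 with hf
  set f' : E2 →L[ℝ] ℝ := -((2 : ℝ) • innerSL ℝ (z - P)) with hf'
  have hfd : HasFDerivAt f f' z := by
    have := (((hasFDerivAt_id z).sub_const P).norm_sq).const_sub (ρ ^ 2)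
    refine this.congr_fderiv ?_
    ext v; simp [hf']
  set β := wedge (fderiv ℝ X z) f' / wedge (fderiv ℝ X z) (fderiv ℝ p z) with hβ
  have hβ0 : β < 0 := by
    obtain ⟨L, hL⟩ := exists_equiv_of_wedge_ne_zero (hJ0 z hzU)
    have hLτ : (fderiv ℝ X z (L.symm (0, 1)), fderiv ℝ p z (L.symm (0, 1))) = (0, 1) := by
      have := congrArg (fun A : E2 →L[ℝ] ℝ × ℝ => A (L.symm (0, 1))) hL
      simpa using this.symm
    have h1 : fderiv ℝ X z (L.symm (0, 1)) = 0 := congrArg Prod.fst hLτ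
    have h2 : fderiv ℝ p z (L.symm (0, 1)) = 1 := congrArg Prod.snd hLτ
    have h3 := inner_pos_of_isMaxOn hzn hρ (h.contDiffOn_slope'.hasFDerivAt_one hU hzU) hmax h2
    have h4 : f' (L.symm (0, 1)) = β := by
      rw [eq_wedge_smul (hJ0 z hzU) f']
      simp [h1, h2, hβ]
    rw [← h4, hf']
    simp only [_root_.neg_apply, _root_.smul_apply, innerSL_apply_apply, smul_eq_mul]
    linarith
  obtain ⟨b, hb, r₂, hr₂, hcone⟩ := exists_cone_bound (F := fun y => f (θ y)) (x₀ := X z)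
    (t₀ := p z) (by simp [hθz, hf, hzn]) hβ0 ((hθ _ (mem_ball_self hr)).2.2.2 f _ _ (by
      rw [hθz]
      exact hfd.congr_fderiv (eq_wedge_smul (hJ0 z hzU) f')))
  have hr' : min r r₂ ≤ r := min_le_left _ _
  have hS' : ∀ x ∈ U, wedge (fderiv ℝ s x) (fderiv ℝ p x) / wedge (fderiv ℝ X x) (fderiv ℝ p x) =
      k x / m x := fun x hx => by
    rw [← h.curvature x hx, hm]
    exact (mul_div_mul_left _ _ (pow_ne_zero 3 (h.wedge_ne_zero x hx))).symm
  refine false_of_cone_bound (x₀ := X z) (t₀ := p z) (r := min r r₂) (c := c * (-β / 2) / M) (b := b)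
    (V := fun x t => Z (θ (x, t)) - p (θ (x, t)) * Y (θ (x, t))) (S := fun x t => s (θ (x, t)))
    (S' := fun x t => wedge (fderiv ℝ s (θ (x, t))) (fderiv ℝ p (θ (x, t))) /
      wedge (fderiv ℝ X (θ (x, t))) (fderiv ℝ p (θ (x, t))))
    (Q := fun x t => -Y (θ (x, t)))
    (Q' := fun x t => -(wedge (fderiv ℝ X (θ (x, t))) (fderiv ℝ Y (θ (x, t))) /
      wedge (fderiv ℝ X (θ (x, t))) (fderiv ℝ p (θ (x, t)))))
    (lt_min hr hr₂) (div_pos (mul_pos hc (by linarith)) hM0) hb ?_ ?_ ?_ ?_ ?_ ?_ ?_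
  all_goals intro x hx t ht
  all_goals
    obtain ⟨hyN, hyX, hyp, hyd⟩ := hθ _ (hbox hr' x hx t ht)
    have hyU := hNU hyN
  · refine (hyd (fun w => Z w - p w * Y w) (s (θ (x, t))) (-Y (θ (x, t))) ?_).hasDerivAt_fst
    refine ((h.hasFDerivAt_height _ hyU).sub ((h.contDiffOn_slope'.hasFDerivAt_one hU hyU).mul
      (h.contDiffOn_snd.hasFDerivAt_one hU hyU))).congr_fderiv ?_
    module
  · exact (hyd s _ _ ((h.contDiffOn_slope.hasFDerivAt_one hU hyU).congr_fderiv
      (eq_wedge_smul (hJ0 _ hyU) _))).hasDerivAt_fst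
  · refine (hyd (fun w => Z w - p w * Y w) (s (θ (x, t))) (-Y (θ (x, t))) ?_).hasDerivAt_snd
    refine ((h.hasFDerivAt_height _ hyU).sub ((h.contDiffOn_slope'.hasFDerivAt_one hU hyU).mul
      (h.contDiffOn_snd.hasFDerivAt_one hU hyU))).congr_fderiv ?_
    module
  · exact ((hyd Y _ _ ((h.contDiffOn_snd.hasFDerivAt_one hU hyU).congr_fderiv
      (eq_wedge_smul (hJ0 _ hyU) _))).hasDerivAt_snd).neg
  · simp only [hS' _ hyU]
    exact div_nonneg (hk0 _ hyU) (hJ _ hyU).le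
  · intro hpt
    simp only [hS' _ hyU]
    rw [hout _ hyN.2 fun hb => ?_, zero_div]
    have := hlt _ hb
    rw [hyp] at this
    exact absurd hpt (not_le.2 this)
  · intro hpt hxt
    simp only [hS' _ hyU]
    have h1 := hcone x t (by
      rw [abs_lt]
      have := min_le_right r r₂
      exact ⟨by linarith [ht.1], by linarith [ht.2]⟩) hpt hxt
    have h2 : 0 < m (θ (x, t)) := hJ _ hyU
    have h3 : m (θ (x, t)) ≤ M := le_of_lt hyN.1.2
    have h4 : c * (-β / 2 * (p z - t)) ≤ k (θ (x, t)) :=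
      (mul_le_mul_of_nonneg_left h1 hc.le).trans (hkc _ hyU)
    have h5 : c * (-β / 2) / M * (p z - t) = c * (-β / 2 * (p z - t)) / M := by ring
    rw [h5]
    exact div_le_div₀ (hk0 _ hyU) h4 h2 h3

theorem exists_mem_sphere_eq {c x : E2} {R : ℝ} (hx : x ∈ sphere c R) :
    ∃ θ : ℝ, x = c + (R * Real.cos θ) • stdVec 0 + (R * Real.sin θ) • stdVec 1 := by
  set w : ℂ := ⟨x 0 - c 0, x 1 - c 1⟩ with hw
  have hn : ‖w‖ = R := by
    rw [mem_sphere, EuclideanSpace.dist_eq, Fin.sum_univ_two, Real.dist_eq, Real.dist_eq,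
      sq_abs, sq_abs] at hx
    rw [Complex.norm_eq_sqrt_sq_add_sq, ← hx]
  refine ⟨w.arg, ?_⟩
  rw [← hn, Complex.norm_mul_cos_arg, Complex.norm_mul_sin_arg]
  ext i
  fin_cases i <;> simp [hw]

/-- A function which is critical on a circle is constant there, hence it also has a critical point
inside. -/
theorem exists_sphere_fderiv_ne_zero {U : Set E2} {p : E2 → ℝ} {c : E2} {R : ℝ} (hU : IsOpen U)
    (hp : ContDiffOn ℝ 1 p U) (hR : 0 < R) (hsub : closedBall c R ⊆ U)
    (h0 : ∀ x ∈ ball c R, fderiv ℝ p x ≠ 0) : ∃ q ∈ sphere c R, fderiv ℝ p q ≠ 0 := by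
  by_contra! hcon
  set γ : ℝ → E2 := fun θ => c + (R * Real.cos θ) • stdVec 0 + (R * Real.sin θ) • stdVec 1 with hγ
  have hγs : ∀ θ, γ θ ∈ sphere c R := fun θ => by
    rw [mem_sphere, EuclideanSpace.dist_eq, Fin.sum_univ_two, Real.sqrt_eq_iff_eq_sq (by positivity)
      hR.le, Real.dist_eq, Real.dist_eq, sq_abs, sq_abs]
    simp [hγ]
    linear_combination R ^ 2 * Real.cos_sq_add_sin_sq θ
  have hconst : ∀ x ∈ sphere c R, p x = p (γ 0) := fun x hx => by
    obtain ⟨θ, rfl⟩ := exists_mem_sphere_eq hx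
    have hd : ∀ θ, HasDerivAt (p ∘ γ) 0 θ := fun θ => by
      have h1 : HasDerivAt γ ((R * -Real.sin θ) • stdVec 0 + (R * Real.cos θ) • stdVec 1) θ :=
        ((((Real.hasDerivAt_cos θ).const_mul R).smul_const (stdVec 0)).const_add c).add
          (((Real.hasDerivAt_sin θ).const_mul R).smul_const (stdVec 1))
      have h2 := hp.hasFDerivAt_one hU (hsub (sphere_subset_closedBall (hγs θ)))
      rw [hcon _ (hγs θ)] at h2
      exact h2.comp_hasDerivAt θ h1
    exact is_const_of_deriv_eq_zero (fun θ => (hd θ).differentiableAt) (fun θ => (hd θ).deriv) θ 0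
  have hcont := hp.continuousOn.mono hsub
  have hne : (closedBall c R).Nonempty := ⟨c, mem_closedBall_self hR.le⟩
  obtain ⟨z, hz, hmax⟩ := (isCompact_closedBall c R).exists_isMaxOn hne hcont
  obtain ⟨y, hy, hmin⟩ := (isCompact_closedBall c R).exists_isMinOn hne hcont
  have hbd : ∀ w ∈ closedBall c R, IsLocalExtr p w ∨ w ∉ ball c R → w ∈ sphere c R := by
    rintro w hw (he | hb)
    · by_contra hws
      exact h0 w (lt_of_le_of_ne hw hws) he.fderiv_eq_zero
    · exact le_antisymm hw (not_lt.1 hb)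
  have hzs : z ∈ sphere c R := hbd z hz <| by
    by_cases hb : z ∈ ball c R
    · exact .inl (.inr (hmax.isLocalMax (mem_nhds_iff.2 ⟨_, ball_subset_closedBall, isOpen_ball, hb⟩)))
    · exact .inr hb
  have hys : y ∈ sphere c R := hbd y hy <| by
    by_cases hb : y ∈ ball c R
    · exact .inl (.inl (hmin.isLocalMin (mem_nhds_iff.2 ⟨_, ball_subset_closedBall, isOpen_ball, hb⟩)))
    · exact .inr hb
  refine h0 c (mem_ball_self hR) (IsLocalMax.fderiv_eq_zero ?_)
  filter_upwards [closedBall_mem_nhds c hR] with x hx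
  calc p x ≤ p z := hmax hx
    _ = p y := (hconst z hzs).trans (hconst y hys).symm
    _ ≤ p c := hmin (mem_closedBall_self hR.le)

theorem IsGraph.wedge_slope_ne_zero {U : Set E2} {k X Y Z s p : E2 → ℝ} {q : E2}
    (h : IsGraph U k X Y Z s p) (hq : q ∈ U) (hk : k q = 0) (hp : fderiv ℝ p q ≠ 0) :
    wedge (fderiv ℝ X q) (fderiv ℝ p q) ≠ 0 := by
  intro hw
  have hD := h.wedge_ne_zero q hq
  have hS : wedge (fderiv ℝ s q) (fderiv ℝ p q) = 0 := by
    simpa [hk, hD] using h.curvature q hq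
  have hsym := h.symm q hq
  have hpX : fderiv ℝ p q = (wedge (fderiv ℝ p q) (fderiv ℝ Y q) /
      wedge (fderiv ℝ X q) (fderiv ℝ Y q)) • fderiv ℝ X q := by
    have := eq_wedge_smul hD (fderiv ℝ p q)
    rw [hw, zero_div, zero_smul, add_zero] at this
    exact this
  set μ := wedge (fderiv ℝ p q) (fderiv ℝ Y q) / wedge (fderiv ℝ X q) (fderiv ℝ Y q) with hμ
  have hμ0 : μ ≠ 0 := fun e => hp (by rw [hpX, e, zero_smul])
  have h1 : μ * wedge (fderiv ℝ s q) (fderiv ℝ X q) = 0 := by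
    rw [← hS, hpX]
    simp only [wedge, _root_.smul_apply, smul_eq_mul]
    ring
  have h2 : wedge (fderiv ℝ s q) (fderiv ℝ X q) = 0 := by simpa [hμ0] using h1
  rw [h2, zero_add] at hsym
  exact hμ0 (by rw [hμ, hsym, zero_div])

/-- No graph has a curvature function adapted to the family of discs. -/
theorem IsGraph.false_of_discs {k X Y Z s p : E2 → ℝ} {r : ℝ} (hr : 0 < r)
    (h : IsGraph (ball 0 r) k X Y Z s p) (hk : ∀ x ∈ ball 0 r, 0 ≤ k x)
    (hk0 : ∀ x, (∀ i, x ∉ ball (discCenter i) (discRadius i)) → k x = 0)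
    (hkc : ∀ i, ∃ c > 0, ∀ x ∈ ball 0 r,
      c * (discRadius i ^ 2 - ‖x - discCenter i‖ ^ 2) ≤ k x) : False := by
  obtain ⟨i, hi, hsph, hsmall⟩ := exists_discs r hr
  have hU := h.isOpen
  obtain ⟨q, hq, hpq⟩ := exists_sphere_fderiv_ne_zero hU h.contDiffOn_slope' (discRadius_pos i) hi
    fun x hx e => by
      have hxU := hi (ball_subset_closedBall hx)
      obtain ⟨c, hc, hck⟩ := hkc i
      have h1 := hck x hxU
      rw [← h.curvature x hxU, e] at h1
      have h2 : 0 < discRadius i ^ 2 - ‖x - discCenter i‖ ^ 2 := by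
        rw [mem_ball, dist_eq_norm] at hx
        have := pow_lt_pow_left₀ hx (norm_nonneg _) two_ne_zero
        linarith
      have h3 := mul_pos hc h2
      simp [wedge] at h1
      linarith
  have hqU := hi (sphere_subset_closedBall hq)
  have hw := h.wedge_slope_ne_zero hqU (hk0 q (hsph q hq)) hpq
  obtain ⟨p', s', Z', h', hpos⟩ : ∃ p' s' Z', IsGraph (ball 0 r) k X Y Z' s' p' ∧
      0 < wedge (fderiv ℝ X q) (fderiv ℝ Y q) ^ 3 * wedge (fderiv ℝ X q) (fderiv ℝ p' q) := by
    rcases lt_or_gt_of_ne (mul_ne_zero (pow_ne_zero 3 (h.wedge_ne_zero q hqU)) hw) with hn | hn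
    · refine ⟨-p, -s, -Z, h.neg, ?_⟩
      have : wedge (fderiv ℝ X q) (fderiv ℝ (-p) q) = -wedge (fderiv ℝ X q) (fderiv ℝ p q) := by
        rw [fderiv_neg]
        simp only [wedge, _root_.neg_apply]
        ring
      rw [this]
      linarith
    · exact ⟨p, s, Z, h, hn⟩
  have hcont := ((h'.2.continuousOn_wedge h'.3 hU).pow 3).mul (h'.2.continuousOn_wedge h'.5 hU)
  obtain ⟨ε, hε, hεV⟩ := Metric.isOpen_iff.1 (hcont.isOpen_inter_preimage hU isOpen_Ioi) q
    ⟨hqU, hpos⟩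
  obtain ⟨j, hj, hsep⟩ := hsmall q hq ε hε
  obtain ⟨c, hc, hck⟩ := hkc j
  refine (h'.mono isOpen_ball fun x hx => (hεV hx).1).false_of_disc (fun x hx => (hεV hx).2)
    (discRadius_pos j) hc hj (fun x hx => hk x (hεV hx).1) (fun x hx => hck x (hεV hx).1)
    fun x hx hxj => hk0 x fun l hl => ?_
  by_cases e : l = j
  · exact hxj (e ▸ hl)
  · have h1 := hsep l e
    have h2 := dist_triangle (discCenter l) x (discCenter j)
    rw [mem_ball] at hx hl
    rw [dist_comm (discCenter l) x] at h2
    linarith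

section ConformalMetric

variable {U : Set E2} {l : E2 → ℝ} {l1 : E2 → E2 →L[ℝ] ℝ} {l2 : E2 → E2 →L[ℝ] E2 →L[ℝ] ℝ} {x : E2}

theorem pd_pd_of_hasFDerivAt (hU : IsOpen U) (hl1 : ∀ x ∈ U, HasFDerivAt l (l1 x) x)
    (hl2 : ∀ x ∈ U, HasFDerivAt l1 (l2 x) x) (hx : x ∈ U) (i : Fin 2) :
    pd i (pd i l) x = l2 x (stdVec i) (stdVec i) := by
  have h : pd i l =ᶠ[nhds x] fun y => l1 y (stdVec i) :=
    Filter.eventuallyEq_of_mem (hU.mem_nhds hx) fun y hy => by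
      simp only [pd, (hl1 y hy).fderiv]
  have h' := (hl2 x hx).clm_apply (hasFDerivAt_const (stdVec i) x)
  rw [pd, h.fderiv_eq, h'.fderiv]
  simp

theorem gaussK_smul_one (hU : IsOpen U) (hl1 : ∀ x ∈ U, HasFDerivAt l (l1 x) x)
    (hl2 : ∀ x ∈ U, HasFDerivAt l1 (l2 x) x) (hx : x ∈ U) :
    gaussK (fun y => l y • (1 : Matrix (Fin 2) (Fin 2) ℝ)) x =
      (-(1 / 2) * l x ^ 2 * lap (l2 x) +
        (1 / 2) * l x * (l1 x (stdVec 0) ^ 2 + l1 x (stdVec 1) ^ 2)) / (l x ^ 2) ^ 2 := by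
  have hp : ∀ i, pd i l x = l1 x (stdVec i) := fun i => by rw [pd, (hl1 x hx).fderiv]
  have h0 : ∀ i x, pd i (fun _ => 0) x = 0 := fun i x => by simp [pd]
  have hpp := pd_pd_of_hasFDerivAt hU hl1 hl2 hx
  have h00 : ∀ i j, pd i (pd j fun _ => 0) x = 0 := fun i j => by
    rw [show pd j (fun _ => (0 : ℝ)) = fun _ => 0 from funext (h0 j), h0]
  simp only [gaussK, Matrix.smul_apply, Matrix.one_apply_eq, smul_eq_mul, mul_one, mul_zero,
    Matrix.one_apply_ne (show (0 : Fin 2) ≠ 1 by decide), hp, hpp, h0, h00, Matrix.det_fin_three,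
    lap_apply]
  congr 1
  · simp
    ring
  · ring

theorem IsC21.lipschitzOnWith_smul {V : Type*} [NormedAddCommGroup V] [NormedSpace ℝ V]
    (h : IsC21 l l1 l2) (v : V) : ∃ L : NNReal,
      LipschitzOnWith L (fun x => iteratedFDeriv ℝ 2 (fun y => l y • v) x) (ball (0 : E2) 1) := by
  obtain ⟨L, hL⟩ := h.lipschitzOnWith
  set A : ℝ →L[ℝ] V := ContinuousLinearMap.toSpanSingleton ℝ v
  have he : ∀ x ∈ ball (0 : E2) 1, iteratedFDeriv ℝ 2 (fun y => l y • v) x =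
      ContinuousLinearMap.compContinuousMultilinearMapL ℝ (fun _ : Fin 2 => E2) ℝ V A
        (iteratedFDeriv ℝ 2 l x) := fun x hx =>
    A.iteratedFDeriv_comp_left (h.contDiffOn.contDiffAt (isOpen_ball.mem_nhds hx)) le_rfl
  have hA := (ContinuousLinearMap.compContinuousMultilinearMapL ℝ (fun _ : Fin 2 => E2) ℝ V
    A).lipschitz.comp_lipschitzOnWith hL
  refine ⟨_, fun x hx y hy => (?_ : _ ≤ _).trans (hA hx hy)⟩
  simp only [he x hx, he y hy]
  rfl

end ConformalMetric

theorem IsConformalTriple.of_jac {U : Set E2} {l : E2 → ℝ} {u : E2 → EuclideanSpace ℝ (Fin 3)}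
    (hU : IsOpen U) (hu : ContDiffOn ℝ 2 u U)
    (h : ∀ x ∈ U, (Jac u x)ᵀ * Jac u x = l x • (1 : Matrix (Fin 2) (Fin 2) ℝ)) :
    IsConformalTriple U l (fun x => u x 0) (fun x => u x 1) (fun x => u x 2) := by
  have hpd : ∀ x ∈ U, ∀ i j, pd i (fun x => u x j) x = Jac u x j i := fun x hx i j => by
    have hd := ((hu.differentiableOn two_ne_zero).differentiableAt (hU.mem_nhds hx)).hasFDerivAt
    have := (EuclideanSpace.proj (𝕜 := ℝ) j).hasFDerivAt.comp x hd
    rw [pd, show (fun x => u x j) = EuclideanSpace.proj (𝕜 := ℝ) j ∘ u from rfl, this.fderiv]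
    simp [Jac]
  have hm : ∀ x ∈ U, ∀ i j, Jac u x 0 i * Jac u x 0 j + Jac u x 1 i * Jac u x 1 j +
      Jac u x 2 i * Jac u x 2 j = (l x • (1 : Matrix (Fin 2) (Fin 2) ℝ)) i j := fun x hx i j => by
    rw [← h x hx, Matrix.mul_apply, Fin.sum_univ_three]
    rfl
  refine ⟨?_, ?_, ?_, fun x hx => ?_, fun x hx => ?_, fun x hx => ?_⟩
  · exact (EuclideanSpace.proj (𝕜 := ℝ) (0 : Fin 3)).contDiff.comp_contDiffOn hu
  · exact (EuclideanSpace.proj (𝕜 := ℝ) (1 : Fin 3)).contDiff.comp_contDiffOn hu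
  · exact (EuclideanSpace.proj (𝕜 := ℝ) (2 : Fin 3)).contDiff.comp_contDiffOn hu
  · simpa [hpd x hx] using hm x hx 0 0
  · simpa [hpd x hx] using hm x hx 1 1
  · simpa [hpd x hx] using hm x hx 0 1

theorem IsConformalTriple.exists_wedge_ne_zero {U : Set E2} {l X Y Z : E2 → ℝ} {x : E2}
    (h : IsConformalTriple U l X Y Z) (hx : x ∈ U) (hl : 0 < l x) :
    ∃ X' Y' Z', IsConformalTriple U l X' Y' Z' ∧ wedge (fderiv ℝ X' x) (fderiv ℝ Y' x) ≠ 0 := by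
  by_contra! hcon
  have h1 := hcon _ _ _ h
  have h2 := hcon _ _ _ h.rotate
  have h3 := hcon _ _ _ h.rotate.rotate
  have h4 := h.metric_zero x hx
  have h5 := h.metric_one x hx
  have h6 := h.metric_mixed x hx
  change pd 0 X x * pd 1 Y x - pd 1 X x * pd 0 Y x = 0 at h1
  change pd 0 Y x * pd 1 Z x - pd 1 Y x * pd 0 Z x = 0 at h2
  change pd 0 Z x * pd 1 X x - pd 1 Z x * pd 0 X x = 0 at h3
  refine (mul_pos hl hl).ne' ?_
  nth_rw 1 [← h4]
  rw [← h5]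
  linear_combination (pd 0 X x * pd 1 Y x - pd 1 X x * pd 0 Y x) * h1 +
    (pd 0 Y x * pd 1 Z x - pd 1 Y x * pd 0 Z x) * h2 +
    (pd 0 Z x * pd 1 X x - pd 1 Z x * pd 0 X x) * h3 +
    (pd 0 X x * pd 1 X x + pd 0 Y x * pd 1 Y x + pd 0 Z x * pd 1 Z x) * h6

theorem IsConformalTriple.mono {U V : Set E2} {l X Y Z : E2 → ℝ} (h : IsConformalTriple U l X Y Z)
    (hV : V ⊆ U) : IsConformalTriple V l X Y Z :=
  ⟨h.1.mono hV, h.2.mono hV, h.3.mono hV, fun x hx => h.4 x (hV hx), fun x hx => h.5 x (hV hx),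
    fun x hx => h.6 x (hV hx)⟩

/-- **Nadirashvili–Yuan (2008).** There exists a `C^{2,1}` Riemannian metric `g` on the
unit ball `B₁ ⊂ ℝ²` with nonnegative Gauss curvature such that no neighborhood `B_r` of
the origin admits a `C²` isometric immersion of `(B_r, g)` into `ℝ³`. -/
theorem nadirashvili_yuan :
    ∃ g : E2 → Matrix (Fin 2) (Fin 2) ℝ,
      ContDiffOn ℝ 2 g (ball (0 : E2) 1) ∧
      (∃ L : NNReal, LipschitzOnWith L (fun x => iteratedFDeriv ℝ 2 g x) (ball (0 : E2) 1)) ∧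
      (∀ x ∈ ball (0 : E2) 1, (g x).IsSymm ∧ (g x).PosDef) ∧
      (∀ x ∈ ball (0 : E2) 1, 0 ≤ gaussK g x) ∧
      ∀ r : ℝ, 0 < r → r ≤ 1 →
        ¬ ∃ u : E2 → EuclideanSpace ℝ (Fin 3),
            ContDiffOn ℝ 2 u (ball (0 : E2) r) ∧
            ∀ x ∈ ball (0 : E2) r, (Jac u x)ᵀ * Jac u x = g x := by
  obtain ⟨l, l1, l2, k, hl, hl0, hlk, hk, hk0, hkc⟩ :=
    exists_conformal_factor discCenter discRadius discRadius_pos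
  refine ⟨fun x => l x • 1, hl.contDiffOn.smul contDiffOn_const, hl.lipschitzOnWith_smul _,
    fun x _ => ⟨Matrix.isSymm_one.smul _, Matrix.PosDef.one.smul (hl0 x)⟩, fun x hx => ?_, ?_⟩
  · rw [gaussK_smul_one isOpen_ball hl.deriv_one hl.deriv_two hx, hlk x hx]
    exact div_nonneg (hk x hx) (by positivity)
  · rintro r hr hr1 ⟨u, hu, hug⟩
    obtain ⟨X, Y, Z, h, hD⟩ := (IsConformalTriple.of_jac isOpen_ball hu hug).exists_wedge_ne_zero
      (mem_ball_self hr) (hl0 0)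
    have hcont := (h.1.of_le one_le_two).continuousOn_wedge (h.2.of_le one_le_two) isOpen_ball
    obtain ⟨ε, hε, hεV⟩ := Metric.isOpen_iff.1
      (hcont.isOpen_inter_preimage isOpen_ball isOpen_compl_singleton) 0 ⟨mem_ball_self hr, hD⟩
    have h1 : ball (0 : E2) ε ⊆ ball 0 1 := fun x hx => ball_subset_ball hr1 (hεV hx).1
    exact IsGraph.false_of_discs hε
      ((h.mono fun x hx => (hεV hx).1).isGraph isOpen_ball (fun x hx => hl.deriv_one x (h1 hx))
        (fun x hx => hl.deriv_two x (h1 hx)) (fun x hx => hlk x (h1 hx)) fun x hx => (hεV hx).2)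
      (fun x hx => hk x (h1 hx)) hk0 fun i => by
        obtain ⟨c, hc, hck⟩ := hkc i
        exact ⟨c, hc, fun x hx => hck x (h1 hx)⟩
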